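/- arXiv:1806.05200 — 2 statements merged into one kernel-verified Lean document; each statement's English description precedes it below -/
import Mathlib

section
/- For n ≥ 3, the graded Betti number β_{2,4}(S/I) is strictly positive, where I = (y_i y_j − xz : 1 ≤ i < j ≤ n) is the join-meet ideal of the diamond lattice D_{n+2}; consequently I, which is generated in degree 2, is not linearly related. -/
open MvPolynomial

noncomputable def xP (K : Type*) [Field K] (n : ℕ) : MvPolynomial (Fin (n + 2)) K := X 0
noncomputable def zP (K : Type*) [Field K] (n : ℕ) : MvPolynomial (Fin (n + 2)) K :=
  X (Fin.last (n + 1))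
noncomputable def yP (K : Type*) [Field K] (n : ℕ) (i : Fin n) : MvPolynomial (Fin (n + 2)) K :=
  X i.succ.castSucc

/-- The join-meet ideal `I` of the diamond lattice `D_{n+2}`. -/
noncomputable def diamondIdeal (K : Type*) [Field K] (n : ℕ) :
    Ideal (MvPolynomial (Fin (n + 2)) K) :=
  Ideal.span {f | ∃ i j : Fin n, i < j ∧ f = yP K n i * yP K n j - xP K n * zP K n}

def mdeg {σ : Type*} (m : σ →₀ ℕ) : ℕ := m.sum fun _ e => e

/-- A minimal graded free resolution
`⋯ → F_{i+1} → F_i → ⋯ → F_0 → S/I → 0` of `S/I` over `S = K[x_s : s ∈ σ]`.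
`F_i` is free with finite homogeneous basis `B i`, the basis element `b : B i` having
degree `deg i b`; the differentials are graded and have entries in the graded maximal
ideal (minimality); `ε` is a lift of the augmentation `F_0 → S/I`. -/
structure MinGradedFreeRes (K : Type*) [Field K] (σ : Type*) (I : Ideal (MvPolynomial σ K)) where
  B : ℕ → Type
  finB : ∀ i, Finite (B i)
  deg : ∀ i, B i → ℕ
  d : ∀ i, ((B (i + 1)) →₀ MvPolynomial σ K) →ₗ[MvPolynomial σ K] ((B i) →₀ MvPolynomial σ K)
  ε : ((B 0) →₀ MvPolynomial σ K) →ₗ[MvPolynomial σ K] MvPolynomial σ K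
  ε_homog : ∀ b : B 0, (ε (Finsupp.single b 1)).IsHomogeneous (deg 0 b)
  surj : ∀ s : MvPolynomial σ K, ∃ t, ε t - s ∈ I
  exact0 : LinearMap.range (d 0) = Submodule.comap ε (I : Submodule _ _)
  exact : ∀ i, LinearMap.range (d (i + 1)) = LinearMap.ker (d i)
  homog : ∀ i (b : B (i + 1)) (c : B i),
    ∀ m ∈ ((d i (Finsupp.single b 1)) c).support, mdeg m + deg i c = deg (i + 1) b
  minimal : ∀ i (b : B (i + 1)) (c : B i), coeff 0 ((d i (Finsupp.single b 1)) c) = 0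

/-- The graded Betti number `β_{i,j}(S/I)` read off from a minimal graded free resolution:
the number of basis elements of `F_i` of degree `j`. -/
noncomputable def MinGradedFreeRes.betti {K : Type*} [Field K] {σ : Type*}
    {I : Ideal (MvPolynomial σ K)} (F : MinGradedFreeRes K σ I) (i j : ℕ) : ℕ :=
  Nat.card {b : F.B i // F.deg i b = j}


namespace DiamondAux

theorem mdeg_eq {σ : Type*} (m : σ →₀ ℕ) : mdeg m = m.degree := by
  simp [mdeg, Finsupp.degree_apply, Finsupp.sum]

theorem mdeg_add {σ : Type*} (m m' : σ →₀ ℕ) : mdeg (m + m') = mdeg m + mdeg m' := by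
  simp [mdeg_eq]

theorem mdeg_eq_zero {σ : Type*} {m : σ →₀ ℕ} (h : mdeg m = 0) : m = 0 := by
  rw [mdeg_eq] at h
  exact (Finsupp.degree_eq_zero_iff m).1 h

section generic
variable {K : Type*} [Field K] {σ : Type*} {B Btwo : Type}

/-- homogeneous element of degree `j` of the graded free module with basis degrees `deg`. -/
def IsHom (deg : B → ℕ) (j : ℕ) (v : B →₀ MvPolynomial σ K) : Prop :=
  ∀ c, ∀ m ∈ (v c).support, mdeg m + deg c = j

/-- homogeneous component. -/
noncomputable def cmp (deg : B → ℕ) (j : ℕ) (v : B →₀ MvPolynomial σ K) :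
    B →₀ MvPolynomial σ K :=
  Finsupp.onFinset v.support
    (fun c => if deg c ≤ j then homogeneousComponent (j - deg c) (v c) else 0) (by
      intro c hc
      rw [Finsupp.mem_support_iff]
      intro h
      simp [h] at hc)

theorem coeff_cmp (deg : B → ℕ) (j : ℕ) (v : B →₀ MvPolynomial σ K) (c : B) (m : σ →₀ ℕ) :
    coeff m (cmp deg j v c) = if mdeg m + deg c = j then coeff m (v c) else 0 := by
  simp only [cmp, Finsupp.onFinset_apply]
  by_cases h : deg c ≤ j
  · rw [if_pos h, coeff_homogeneousComponent, ← mdeg_eq]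
    have : mdeg m = j - deg c ↔ mdeg m + deg c = j := by omega
    simp [this]
  · rw [if_neg h, if_neg (by omega)]
    simp

theorem cmp_add (deg : B → ℕ) (j : ℕ) (v w : B →₀ MvPolynomial σ K) :
    cmp deg j (v + w) = cmp deg j v + cmp deg j w := by
  ext c m
  simp only [Finsupp.add_apply, coeff_add, coeff_cmp]
  split_ifs <;> simp

theorem cmp_zero (deg : B → ℕ) (j : ℕ) : cmp deg j (0 : B →₀ MvPolynomial σ K) = 0 := by
  ext c m
  simp [coeff_cmp]

theorem isHom_cmp (deg : B → ℕ) (j : ℕ) (v : B →₀ MvPolynomial σ K) :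
    IsHom deg j (cmp deg j v) := by
  intro c m hm
  rw [mem_support_iff, coeff_cmp] at hm
  by_contra h
  simp [h] at hm

theorem IsHom.cmp_eq {deg : B → ℕ} {t : ℕ} {v : B →₀ MvPolynomial σ K} (h : IsHom deg t v)
    (j : ℕ) : cmp deg j v = if t = j then v else 0 := by
  ext c m
  rw [coeff_cmp]
  by_cases hm : m ∈ (v c).support
  · have := h c m hm
    rw [this]
    split_ifs <;> simp
  · rw [notMem_support_iff] at hm
    split_ifs <;> simp [hm]

theorem IsHom.cmp_self {deg : B → ℕ} {t : ℕ} {v : B →₀ MvPolynomial σ K} (h : IsHom deg t v) :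
    cmp deg t v = v := by
  rw [h.cmp_eq, if_pos rfl]

theorem IsHom.add {deg : B → ℕ} {t : ℕ} {v w : B →₀ MvPolynomial σ K} (h : IsHom deg t v)
    (h' : IsHom deg t w) : IsHom deg t (v + w) := by
  classical
  intro c m hm
  rcases Finset.mem_union.1 (support_add hm) with hm | hm
  · exact h c m hm
  · exact h' c m hm

theorem IsHom.neg {deg : B → ℕ} {t : ℕ} {v : B →₀ MvPolynomial σ K} (h : IsHom deg t v) :
    IsHom deg t (-v) := by
  intro c m hm
  refine h c m ?_
  simpa using hm

theorem IsHom.smul {deg : B → ℕ} {t s u : ℕ} {v : B →₀ MvPolynomial σ K} (h : IsHom deg t v)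
    {p : MvPolynomial σ K} (hp : ∀ m ∈ p.support, mdeg m = s) (hu : s + t = u) :
    IsHom deg u (p • v) := by
  classical
  intro c m hm
  have := support_mul p (v c) hm
  obtain ⟨a, ha, b, hb, rfl⟩ := Finset.mem_add.1 this
  rw [mdeg_add]
  have h1 := hp a ha
  have h2 := h c b hb
  omega

theorem isHom_single (deg : B → ℕ) {s t : ℕ} (b : B) {p : MvPolynomial σ K}
    (hp : ∀ m ∈ p.support, mdeg m = s) (ht : s + deg b = t) :
    IsHom deg t (Finsupp.single b p) := by
  classical
  intro c m hm
  rw [Finsupp.single_apply] at hm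
  split_ifs at hm with h
  · subst h; rw [hp m hm, ht]
  · simp at hm

theorem monomial_mdeg (m : σ →₀ ℕ) (a : K) : ∀ m' ∈ (monomial m a).support, mdeg m' = mdeg m := by
  classical
  intro m' hm'
  have := support_monomial_subset hm'
  rw [Finset.mem_singleton.1 this]

theorem map_cmp {deg : B → ℕ} {deg' : Btwo → ℕ}
    (d : (Btwo →₀ MvPolynomial σ K) →ₗ[MvPolynomial σ K] (B →₀ MvPolynomial σ K))
    (hd : ∀ b, IsHom deg (deg' b) (d (Finsupp.single b 1))) (j : ℕ) (v : Btwo →₀ MvPolynomial σ K) :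
    d (cmp deg' j v) = cmp deg j (d v) := by
  induction v using Finsupp.induction_linear with
  | zero => simp [cmp_zero]
  | add f g hf hg => simp [cmp_add, hf, hg]
  | single b p =>
    induction p using MvPolynomial.induction_on' with
    | add p q hp hq => rw [Finsupp.single_add]; simp [cmp_add, hp, hq]
    | monomial m a =>
      have h1 : IsHom deg' (mdeg m + deg' b) (Finsupp.single b (monomial m a)) :=
        isHom_single deg' b (monomial_mdeg m a) rfl
      have h2 : d (Finsupp.single b (monomial m a)) = (monomial m a) • d (Finsupp.single b 1) := by
        rw [← map_smul, Finsupp.smul_single, smul_eq_mul, mul_one]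
      have h3 : IsHom deg (mdeg m + deg' b) (d (Finsupp.single b (monomial m a))) := by
        rw [h2]
        exact (hd b).smul (monomial_mdeg m a) rfl
      rw [h1.cmp_eq, h3.cmp_eq]
      split_ifs <;> simp

theorem eq_sum_cmp (deg : B → ℕ) (v : B →₀ MvPolynomial σ K) :
    ∃ M, v = ∑ j ∈ Finset.range M, cmp deg j v := by
  refine ⟨v.support.sup (fun c => totalDegree (v c) + deg c) + 1, ?_⟩
  ext c m
  simp only [Finsupp.coe_finsetSum, Finset.sum_apply, coeff_sum, coeff_cmp]
  rw [Finset.sum_ite_eq]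
  split_ifs with h
  · rfl
  · by_contra hm
    apply h
    have hm' : m ∈ (v c).support := by rwa [mem_support_iff]
    have hc : c ∈ v.support := by
      rw [Finsupp.mem_support_iff]
      intro h0
      simp [h0] at hm
    have h1 := Finset.le_sup (f := fun c => totalDegree (v c) + deg c) hc
    have h2 : mdeg m ≤ totalDegree (v c) := le_totalDegree hm'
    simp only [Finset.mem_range]
    omega

/-- graded submodule. -/
def IsGr (deg : B → ℕ) (N : Submodule (MvPolynomial σ K) (B →₀ MvPolynomial σ K)) : Prop :=
  ∀ v ∈ N, ∀ j, cmp deg j v ∈ N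

theorem exists_gens [Finite σ] [Finite B] (deg : B → ℕ)
    (N : Submodule (MvPolynomial σ K) (B →₀ MvPolynomial σ K)) (hN : IsGr deg N) :
    ∃ k, ∃ g : Fin k → (B →₀ MvPolynomial σ K), (∀ i, ∃ j, IsHom deg j (g i)) ∧
      Submodule.span _ (Set.range g) = N := by
  set H : Set (B →₀ MvPolynomial σ K) := {v | v ∈ N ∧ ∃ j, IsHom deg j v} with hH
  have hspan : Submodule.span (MvPolynomial σ K) H = N := by
    apply le_antisymm
    · rw [Submodule.span_le]
      exact fun v hv => hv.1
    · intro v hv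
      obtain ⟨M, hM⟩ := eq_sum_cmp deg v
      rw [hM]
      refine Submodule.sum_mem _ fun j _ => Submodule.subset_span ⟨hN v hv j, j, isHom_cmp _ _ _⟩
  have hfg : (Submodule.span (MvPolynomial σ K) H).FG := IsNoetherian.noetherian _
  rw [Submodule.fg_span_iff_fg_span_finset_subset] at hfg
  obtain ⟨s, hs, hs'⟩ := hfg
  refine ⟨s.card, fun i => (s.equivFin.symm i : _), fun i => (hs (s.equivFin.symm i).2).2, ?_⟩
  rw [← hspan, hs']
  congr 1
  ext v
  constructor
  · rintro ⟨i, rfl⟩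
    exact (s.equivFin.symm i).2
  · intro hv
    exact ⟨s.equivFin ⟨v, hv⟩, by simp⟩

theorem step [Finite σ] [Finite B] (deg : B → ℕ)
    (N : Submodule (MvPolynomial σ K) (B →₀ MvPolynomial σ K)) (hN : IsGr deg N) :
    ∃ k, ∃ deg' : Fin k → ℕ,
      ∃ d : (Fin k →₀ MvPolynomial σ K) →ₗ[MvPolynomial σ K] (B →₀ MvPolynomial σ K),
      LinearMap.range d = N ∧ (∀ b, IsHom deg (deg' b) (d (Finsupp.single b 1))) ∧
      IsGr deg' (LinearMap.ker d) ∧ ∀ v ∈ LinearMap.ker d, ∀ c, coeff 0 (v c) = 0 := by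
  classical
  have hex := exists_gens deg N hN
  obtain ⟨g, hg, hs⟩ := Nat.find_spec hex
  have hmin := fun {m} => Nat.find_min (m := m) hex
  generalize Nat.find hex = k at *
  choose deg' hdeg using hg
  set d := Finsupp.linearCombination (MvPolynomial σ K) g with hd
  have hds : ∀ b, d (Finsupp.single b 1) = g b := by intro b; simp [hd]
  have hhom : ∀ b, IsHom deg (deg' b) (d (Finsupp.single b 1)) := by
    intro b; rw [hds]; exact hdeg b
  have hgr : IsGr deg' (LinearMap.ker d) := by
    intro v hv j
    rw [LinearMap.mem_ker] at hv ⊢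
    rw [map_cmp d hhom, hv, cmp_zero]
  refine ⟨k, deg', d, ?_, hhom, hgr, ?_⟩
  · rw [hd, Finsupp.range_linearCombination, hs]
  · intro v hv c
    by_contra hc
    have hw := hgr v hv (deg' c)
    set w := cmp deg' (deg' c) v with hwdef
    have hwc : w c = C (coeff 0 (v c)) := by
      ext m
      rw [hwdef, coeff_cmp, coeff_C]
      by_cases hm : m = 0
      · subst hm; simp [mdeg]
      · rw [if_neg, if_neg (Ne.symm hm)]
        intro h
        exact hm (mdeg_eq_zero (by omega))
    obtain ⟨k', rfl⟩ : ∃ k', k = k' + 1 := ⟨k - 1, by have := c.pos; omega⟩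
    refine hmin (m := k') (by omega) ⟨g ∘ c.succAbove, fun i => ⟨_, hdeg _⟩, ?_⟩
    rw [← hs]
    apply le_antisymm
    · exact Submodule.span_mono (Set.range_comp_subset_range _ _)
    · rw [Submodule.span_le]
      have hother : ∀ i, g (c.succAbove i) ∈
          Submodule.span (MvPolynomial σ K) (Set.range (g ∘ c.succAbove)) :=
        fun i => Submodule.subset_span ⟨i, rfl⟩
      rintro _ ⟨b, rfl⟩
      rcases Fin.eq_self_or_eq_succAbove c b with rfl | ⟨i, rfl⟩
      · rw [LinearMap.mem_ker, hd, Finsupp.linearCombination_apply,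
          Finsupp.sum_fintype _ _ (by simp), Fin.sum_univ_succAbove _ b, hwc] at hw
        have : g b = -((C (coeff 0 (v b))⁻¹ : MvPolynomial σ K) • ∑ i, w (b.succAbove i) • g (b.succAbove i)) := by
          rw [eq_neg_of_add_eq_zero_right hw, smul_neg, neg_neg, smul_smul, ← C_mul,
            inv_mul_cancel₀ hc, C_1, one_smul]
        rw [this]
        exact Submodule.neg_mem _ (Submodule.smul_mem _ _
          (Submodule.sum_mem _ fun i _ => Submodule.smul_mem _ _ (hother i)))
      · exact hother i

/-- state of the recursion. -/
structure St (K : Type*) [Field K] (σ : Type*) where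
  k : ℕ
  deg : Fin k → ℕ
  N : Submodule (MvPolynomial σ K) (Fin k →₀ MvPolynomial σ K)
  gr : IsGr deg N
  mn : ∀ v ∈ N, ∀ c, coeff 0 (v c) = 0

theorem St.exists_next [Finite σ] (s : St K σ) : ∃ t : St K σ,
    ∃ d : (Fin t.k →₀ MvPolynomial σ K) →ₗ[MvPolynomial σ K] (Fin s.k →₀ MvPolynomial σ K),
      LinearMap.range d = s.N ∧ (∀ b, IsHom s.deg (t.deg b) (d (Finsupp.single b 1))) ∧
      LinearMap.ker d = t.N := by
  obtain ⟨k, deg', d, h1, h2, h3, h4⟩ := step s.deg s.N s.gr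
  exact ⟨⟨k, deg', LinearMap.ker d, h3, h4⟩, d, h1, h2, rfl⟩

theorem exists_res [Finite σ] (I : Ideal (MvPolynomial σ K))
    (hI : ∀ p ∈ I, ∀ j, homogeneousComponent j p ∈ I) (hI0 : ∀ p ∈ I, coeff 0 p = 0) :
    Nonempty (MinGradedFreeRes K σ I) := by
  classical
  let e : (Fin 1 →₀ MvPolynomial σ K) →ₗ[MvPolynomial σ K] MvPolynomial σ K := Finsupp.lapply 0
  let s0 : St K σ :=
    { k := 1
      deg := fun _ => 0
      N := Submodule.comap e I
      gr := by
        intro v hv j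
        have h1 : v 0 ∈ I := hv
        have h2 : homogeneousComponent j (v 0) ∈ I := hI _ h1 j
        change cmp (fun _ => 0) j v 0 ∈ I
        convert h2 using 1
        simp [cmp]
      mn := by
        intro v hv c
        have h1 : v 0 ∈ I := hv
        rw [Subsingleton.elim c 0]
        exact hI0 _ h1 }
  choose nx d h1 h2 h3 using St.exists_next (K := K) (σ := σ)
  let s : ℕ → St K σ := fun i => Nat.rec s0 (fun _ t => nx t) i
  have hs : ∀ i, s (i + 1) = nx (s i) := fun i => rfl
  refine ⟨{ 
    B := fun i => Fin (s i).k
    finB := fun i => inferInstance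
    deg := fun i => (s i).deg
    d := fun i => d (s i)
    ε := e
    ε_homog := ?_
    surj := fun t => ⟨Finsupp.single 0 t, by simp [e]⟩
    exact0 := h1 s0
    exact := fun i => (h1 (s (i+1))).trans (h3 (s i)).symm
    homog := fun i b c m hm => h2 (s i) b c m hm
    minimal := fun i b c => ?_ }⟩
  · intro b
    have hb : b = 0 := Subsingleton.elim (α := Fin 1) _ _
    subst hb
    have : e (Finsupp.single 0 1) = 1 := by simp [e]
    erw [this]
    exact isHomogeneous_one σ K
  · refine (s i).mn _ ?_ c
    rw [← h1 (s i)]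
    exact ⟨_, rfl⟩

end generic

section diamond
variable {K : Type*} [Field K] {n : ℕ}

theorem isHomogeneous_iff {σ : Type*} {p : MvPolynomial σ K} {d : ℕ} :
    p.IsHomogeneous d ↔ ∀ m ∈ p.support, mdeg m = d := by
  simp only [IsHomogeneous, IsWeightedHomogeneous, mem_support_iff, mdeg_eq,
    Finsupp.degree_eq_weight_one]
  rfl

/-- the generators -/
def gens (K : Type*) [Field K] (n : ℕ) : Set (MvPolynomial (Fin (n + 2)) K) :=
  {f | ∃ i j : Fin n, i < j ∧ f = yP K n i * yP K n j - xP K n * zP K n}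

theorem gens_hom {f : MvPolynomial (Fin (n + 2)) K} (hf : f ∈ gens K n) : f.IsHomogeneous 2 := by
  obtain ⟨i, j, _, rfl⟩ := hf
  exact ((isHomogeneous_X K _).mul (isHomogeneous_X K _)).sub
    ((isHomogeneous_X K _).mul (isHomogeneous_X K _))

theorem diamond_ind {P : MvPolynomial (Fin (n + 2)) K → Prop} (h0 : P 0)
    (hadd : ∀ p q, P p → P q → P (p + q))
    (hmon : ∀ m a, ∀ f ∈ gens K n, P (monomial m a * f)) {h : MvPolynomial (Fin (n + 2)) K}
    (hh : h ∈ diamondIdeal K n) : P h := by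
  refine Submodule.closure_induction (p := fun h _ => P h) h0 (fun x y _ _ => hadd x y) ?_ hh
  intro r f hf
  induction r using MvPolynomial.induction_on' with
  | monomial m a => exact hmon m a f hf
  | add p q hp hq => rw [add_smul]; exact hadd _ _ hp hq

theorem mon_gens_hom (m a) {f : MvPolynomial (Fin (n + 2)) K} (hf : f ∈ gens K n) :
    (monomial m a * f).IsHomogeneous (mdeg m + 2) := by
  refine IsHomogeneous.mul ?_ (gens_hom hf)
  rw [isHomogeneous_iff]
  exact monomial_mdeg m a

theorem diamond_comp {h : MvPolynomial (Fin (n + 2)) K}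
    (hh : h ∈ diamondIdeal K n) (j : ℕ) : homogeneousComponent j h ∈ diamondIdeal K n := by
  refine diamond_ind (P := fun h => homogeneousComponent j h ∈ diamondIdeal K n) ?_ ?_ ?_ hh
  · simp
  · intro p q hp hq
    rw [map_add]
    exact Ideal.add_mem _ hp hq
  · intro m a f hf
    rw [homogeneousComponent_of_mem (mon_gens_hom m a hf)]
    split_ifs
    · exact Ideal.mul_mem_left _ _ (Ideal.subset_span hf)
    · exact Ideal.zero_mem _

theorem diamond_low {h : MvPolynomial (Fin (n + 2)) K}
    (hh : h ∈ diamondIdeal K n) : ∀ m, mdeg m < 2 → coeff m h = 0 := by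
  refine diamond_ind (P := fun h => ∀ m, mdeg m < 2 → coeff m h = 0) ?_ ?_ ?_ hh
  · simp
  · intro p q hp hq m hm
    rw [coeff_add, hp m hm, hq m hm, add_zero]
  · intro m a f hf m' hm'
    by_contra hc
    have := isHomogeneous_iff.1 (mon_gens_hom m a hf) m' (by rwa [mem_support_iff])
    omega

theorem diamond_two {h : MvPolynomial (Fin (n + 2)) K}
    (hh : h ∈ diamondIdeal K n) : homogeneousComponent 2 h ∈ Submodule.span K (gens K n) := by
  refine diamond_ind (P := fun h => homogeneousComponent 2 h ∈ Submodule.span K (gens K n))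
    ?_ ?_ ?_ hh
  · simp
  · intro p q hp hq
    rw [map_add]
    exact Submodule.add_mem _ hp hq
  · intro m a f hf
    rw [homogeneousComponent_of_mem (mon_gens_hom m a hf)]
    split_ifs with h
    · have : m = 0 := mdeg_eq_zero (by omega)
      subst this
      have h2 : monomial 0 a * f = a • f := by
        rw [smul_eq_C_mul]; rfl
      rw [h2]
      exact Submodule.smul_mem _ _ (Submodule.subset_span hf)
    · exact Submodule.zero_mem _

/-- set variables outside `A` to zero -/
noncomputable def th (K : Type*) [Field K] {σ : Type*} (A : Set σ) :
    MvPolynomial σ K →ₐ[K] MvPolynomial σ K :=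
  open Classical in aeval (fun s => if s ∈ A then X s else 0)

theorem coeff_th {σ : Type*} (A : Set σ) (m : σ →₀ ℕ) (hm : ∀ s ∈ m.support, s ∈ A)
    (p : MvPolynomial σ K) : coeff m (th K A p) = coeff m p := by
  classical
  induction p using MvPolynomial.induction_on' with
  | add p q hp hq => simp [hp, hq]
  | monomial u a =>
    by_cases hu : ∀ s ∈ u.support, s ∈ A
    · have : th K A (monomial u a) = monomial u a := by
        rw [th, aeval_monomial, monomial_eq]
        congr 1
        refine Finsupp.prod_congr fun s hs => ?_
        rw [if_pos (hu s hs)]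
      rw [this]
    · have : th K A (monomial u a) = 0 := by
        push Not at hu
        obtain ⟨s, hs, hsA⟩ := hu
        rw [th, aeval_monomial, Finsupp.prod, Finset.prod_eq_zero hs, mul_zero]
        rw [if_neg hsA, zero_pow (Finsupp.mem_support_iff.1 hs)]
      rw [this, coeff_zero, coeff_monomial, if_neg]
      rintro rfl
      exact hu hm

/-- exponent of `xz` -/
noncomputable def xz (n : ℕ) : Fin (n + 2) →₀ ℕ :=
  Finsupp.single 0 1 + Finsupp.single (Fin.last (n + 1)) 1

theorem xP_mul_zP : xP K n * zP K n = monomial (xz n) 1 := by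
  rw [xP, zP, X, X, monomial_mul, mul_one]; rfl

theorem coeff_yy (i j : Fin n) : coeff (xz n) (yP K n i * yP K n j) = 0 := by
  classical
  rw [yP, yP, X, X, monomial_mul, coeff_monomial, if_neg]
  intro h
  have := DFunLike.congr_fun h 0
  simp [xz, Fin.ext_iff] at this

/-- variable subset -/
def As (i : Fin n) : Set (Fin (n + 2)) := {0, Fin.last (n + 1), i.succ.castSucc}

theorem th_y {i j : Fin n} (h : j ≠ i) : th K (As i) (yP K n j) = 0 := by
  classical
  rw [th, yP, aeval_X, if_neg]
  rintro (h' | h' | h')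
  · simp [Fin.ext_iff] at h'
  · simp only [Fin.ext_iff, Fin.val_castSucc, Fin.val_succ, Fin.val_last] at h'
    omega
  · simp only [Set.mem_singleton_iff, Fin.ext_iff, Fin.val_castSucc, Fin.val_succ] at h'
    exact h (Fin.ext (by omega))

theorem th_x (i : Fin n) : th K (As i) (xP K n) = xP K n := by
  classical
  rw [th, xP, aeval_X, if_pos (by simp [As])]

theorem th_z (i : Fin n) : th K (As i) (zP K n) = zP K n := by
  classical
  rw [th, zP, aeval_X, if_pos (by simp [As])]

theorem th_diamond {h : MvPolynomial (Fin (n + 2)) K} (hh : h ∈ diamondIdeal K n)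
    (hd : h.IsHomogeneous 2) (i : Fin n) :
    th K (As i) h = C (coeff (xz n) h) * (xP K n * zP K n) := by
  have h1 := diamond_two hh
  rw [homogeneousComponent_of_mem hd, if_pos rfl] at h1
  clear hh hd
  induction h1 using Submodule.span_induction with
  | zero => simp
  | add p q _ _ hp hq => simp [hp, hq, add_mul]
  | smul a p _ hp => simp [hp, smul_eq_C_mul, mul_assoc]
  | mem f hf =>
    obtain ⟨j, k, hjk, rfl⟩ := hf
    rw [map_sub, map_mul, map_mul, th_x, th_z, coeff_sub, coeff_yy, xP_mul_zP, coeff_monomial,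
      if_pos rfl]
    have : th K (As i) (yP K n j) * th K (As i) (yP K n k) = 0 := by
      by_cases hj : j = i
      · rw [th_y (j := k) (by rintro rfl; subst hj; exact lt_irrefl _ hjk), mul_zero]
      · rw [th_y hj, zero_mul]
    rw [this]
    simp

theorem mdeg_single {σ : Type*} (s : σ) : mdeg (Finsupp.single s 1) = 1 := by simp [mdeg]

theorem lin_zero (hn : 3 ≤ n) {p : MvPolynomial (Fin (n + 2)) K} (hp : ∀ m ∈ p.support, mdeg m ≤ 1)
    (hth : ∀ i : Fin n, th K (As i) p = 0) : p = 0 := by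
  ext m
  rw [coeff_zero]
  by_contra hm
  have h1 := hp m (by rwa [mem_support_iff])
  obtain ⟨k, hk⟩ : ∃ k, ∀ s ∈ m.support, s = k := by
    by_cases h0 : mdeg m = 0
    · rw [mdeg_eq_zero h0]; exact ⟨0, by simp⟩
    · have h2 : m.degree = 1 := by rw [← mdeg_eq]; omega
      have h3 : m ∈ Set.range (fun a : Fin (n + 2) => Finsupp.single a 1) := by
        rw [Finsupp.range_single_one]; exact h2
      obtain ⟨k, rfl⟩ := h3
      exact ⟨k, fun s hs => by
        have := Finsupp.support_single_subset hs
        simpa using this⟩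
  obtain ⟨i, hi⟩ : ∃ i : Fin n, k ∈ As i := by
    by_cases h0 : k.val = 0
    · exact ⟨⟨0, by omega⟩, Or.inl (Fin.ext h0)⟩
    · by_cases h2 : k.val = n + 1
      · exact ⟨⟨0, by omega⟩, Or.inr (Or.inl (Fin.ext h2))⟩
      · exact ⟨⟨k.val - 1, by omega⟩, Or.inr (Or.inr (Fin.ext (by simp; omega)))⟩
  apply hm
  rw [← coeff_th (As i) m (fun s hs => hk s hs ▸ hi), hth i, coeff_zero]

end diamond

section main
variable {K : Type*} [Field K] {n : ℕ}

theorem range_min {σ : Type*} {I : Ideal (MvPolynomial σ K)} (F : MinGradedFreeRes K σ I) (i : ℕ)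
    (v : F.B (i + 1) →₀ MvPolynomial σ K) (c : F.B i) : coeff 0 (F.d i v c) = 0 := by
  induction v using Finsupp.induction_linear with
  | zero => simp
  | add f g hf hg => simp [hf, hg]
  | single b p =>
    have : F.d i (Finsupp.single b p) = p • F.d i (Finsupp.single b 1) := by
      rw [← map_smul, Finsupp.smul_single, smul_eq_mul, mul_one]
    rw [this, Finsupp.smul_apply, smul_eq_mul, ← constantCoeff_eq, map_mul, constantCoeff_eq,
      F.minimal, mul_zero]

theorem aug {σ : Type*} {I : Ideal (MvPolynomial σ K)} (hI0 : ∀ p ∈ I, coeff 0 p = 0)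
    (F : MinGradedFreeRes K σ I) : ∃ b : F.B 0, ∃ c : K, c ≠ 0 ∧ F.deg 0 b = 0 ∧
      ∀ v, F.ε v = C c * v b ∧ v = Finsupp.single b (v b) := by
  classical
  have hε : ∀ v, F.ε v = v.sum fun b p => p * F.ε (Finsupp.single b 1) := by
    intro v
    conv_lhs => rw [← Finsupp.sum_single v, map_finsuppSum]
    refine Finsupp.sum_congr fun b _ => ?_
    rw [← smul_eq_mul, ← map_smul, Finsupp.smul_single, smul_eq_mul, mul_one]
  obtain ⟨b, hb⟩ : ∃ b, coeff 0 (F.ε (Finsupp.single b 1)) ≠ 0 := by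
    by_contra! hall
    obtain ⟨t, ht⟩ := F.surj 1
    have h1 := hI0 _ ht
    have h2 : coeff 0 (F.ε t) = 0 := by
      rw [hε t, ← constantCoeff_eq, map_finsuppSum]
      refine Finset.sum_eq_zero fun b _ => ?_
      simp only [map_mul, constantCoeff_eq]
      rw [hall b, mul_zero]
    rw [coeff_sub, h2] at h1
    simp at h1
  set c := coeff 0 (F.ε (Finsupp.single b 1)) with hc
  have hdeg : F.deg 0 b = 0 := by
    have := isHomogeneous_iff.1 (F.ε_homog b) 0 (by rwa [mem_support_iff])
    rw [← this]; simp [mdeg]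
  have hεb : F.ε (Finsupp.single b 1) = C c := by
    ext m
    rw [coeff_C]
    split_ifs with h
    · rw [← h]
    · by_contra hm
      have := isHomogeneous_iff.1 (F.ε_homog b) m (by rwa [mem_support_iff])
      rw [hdeg] at this
      exact h (mdeg_eq_zero this).symm
  have huniq : ∀ b', b' = b := by
    intro b'
    by_contra hne
    let p := F.ε (Finsupp.single b' 1)
    have h1 : Finsupp.single b' 1 - Finsupp.single b (C c⁻¹ * p) ∈ LinearMap.range (F.d 0) := by
      rw [F.exact0, Submodule.mem_comap]
      have : F.ε (Finsupp.single b (C c⁻¹ * p)) = p := by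
        have h2 : (Finsupp.single b (C c⁻¹ * p) : F.B 0 →₀ MvPolynomial σ K) =
          (C c⁻¹ * p) • Finsupp.single b 1 := by
          rw [Finsupp.smul_single, smul_eq_mul, mul_one]
        rw [h2, map_smul, hεb, smul_eq_mul, mul_right_comm, ← C_mul, inv_mul_cancel₀ hb, C_1,
          one_mul]
      rw [map_sub, this]
      simp [p]
    obtain ⟨w, hw⟩ := h1
    have h3 := range_min F 0 w b'
    rw [hw] at h3
    simp [Ne.symm hne] at h3
  refine ⟨b, c, hb, hdeg, fun v => ?_⟩
  have hv : v = Finsupp.single b (v b) := by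
    ext1 b'
    rw [huniq b', Finsupp.single_eq_same]
  refine ⟨?_, hv⟩
  rw [hv, hε, Finsupp.sum_single_index (by simp), hεb, mul_comm, Finsupp.single_eq_same]

theorem main_betti (hn : 3 ≤ n) (F : MinGradedFreeRes K (Fin (n + 2)) (diamondIdeal K n)) :
    ∃ b : F.B 2, F.deg 2 b = 4 := by
  classical
  by_contra! hno
  have hI0 : ∀ p ∈ diamondIdeal K n, coeff 0 p = 0 := fun p hp =>
    diamond_low hp 0 (by simp [mdeg])
  obtain ⟨b0, c, hc, hdeg0, hε⟩ := aug hI0 F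
  let h : F.B 1 → MvPolynomial (Fin (n + 2)) K := fun b => F.ε (F.d 0 (Finsupp.single b 1))
  have hρ : ∀ v, F.ε (F.d 0 v) = v.sum fun b p => p * h b := by
    intro v
    conv_lhs => rw [← Finsupp.sum_single v, map_finsuppSum, map_finsuppSum]
    refine Finsupp.sum_congr fun b _ => ?_
    rw [← smul_eq_mul, ← map_smul, ← map_smul, Finsupp.smul_single, smul_eq_mul, mul_one]
  have hhI : ∀ b, h b ∈ diamondIdeal K n := by
    intro b
    have : F.d 0 (Finsupp.single b 1) ∈ LinearMap.range (F.d 0) := ⟨_, rfl⟩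
    rw [F.exact0] at this
    exact this
  have hhom : ∀ b, (h b).IsHomogeneous (F.deg 1 b) := by
    intro b
    rw [isHomogeneous_iff]
    intro m hm
    have h1 : h b = C c * _ := (hε _).1
    rw [h1, mem_support_iff, coeff_C_mul] at hm
    have := F.homog 0 b b0 m (by rw [mem_support_iff]; exact right_ne_zero_of_mul hm)
    rw [hdeg0] at this
    simpa using this
  have hlow : ∀ b, F.deg 1 b < 2 → h b = 0 := by
    intro b hb
    ext m
    rw [coeff_zero]
    by_contra hm
    have := isHomogeneous_iff.1 (hhom b) m (by rwa [mem_support_iff])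
    exact hm (diamond_low (hhI b) m (by omega))
  let lam : F.B 1 → K := fun b => if F.deg 1 b = 2 then coeff (xz n) (h b) else 0
  let π := Finsupp.linearCombination (MvPolynomial (Fin (n + 2)) K)
    (fun b => (C (lam b) : MvPolynomial (Fin (n + 2)) K))
  have hπ : ∀ v, π v = v.sum fun b p => p * C (lam b) := by
    intro v
    rfl
  have hxz : xP K n * zP K n ≠ 0 := mul_ne_zero (X_ne_zero _) (X_ne_zero _)
  -- Claim A
  have claimA : ∀ v, ∀ j ≤ 3, IsHom (F.deg 1) j v → (∀ b, coeff 0 (v b) = 0) →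
      F.ε (F.d 0 v) = 0 → π v = 0 := by
    intro v j hj hv hv0 hz
    apply lin_zero hn
    · intro m hm
      rw [hπ, mem_support_iff, Finsupp.sum, coeff_sum] at hm
      obtain ⟨b, _, hb⟩ := Finset.exists_ne_zero_of_sum_ne_zero hm
      rw [mul_comm, coeff_C_mul, mul_comm] at hb
      have h1 : F.deg 1 b = 2 := by
        by_contra hne
        exact right_ne_zero_of_mul hb (if_neg hne)
      have h2 := hv b m (by rw [mem_support_iff]; exact left_ne_zero_of_mul hb)
      omega
    · intro i
      have h1 : th K (As i) (F.ε (F.d 0 v)) = th K (As i) (π v) * (xP K n * zP K n) := by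
        rw [hρ, hπ, Finsupp.sum, Finsupp.sum, map_sum, map_sum, Finset.sum_mul]
        refine Finset.sum_congr rfl fun b hb => ?_
        rw [Finsupp.mem_support_iff] at hb
        obtain ⟨m, hm⟩ := MvPolynomial.ne_zero_iff.1 hb
        have h2 := hv b m (by rwa [mem_support_iff])
        have h3 : mdeg m ≠ 0 := by
          intro h0
          rw [mdeg_eq_zero h0] at hm
          exact hm (hv0 b)
        by_cases h4 : F.deg 1 b = 2
        · have h5 : lam b = coeff (xz n) (h b) := if_pos h4
          rw [map_mul, map_mul, h5, th_diamond (hhI b) (by simpa [h4] using hhom b), mul_assoc]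
          congr 2
          exact (AlgHom.commutes (th K (As i)) _).symm
        · have h5 : lam b = 0 := if_neg h4
          rw [h5, hlow b (by omega)]
          simp
      rw [hz, map_zero] at h1
      exact (mul_eq_zero.1 h1.symm).resolve_right hxz
  -- Claim B
  have claimB : ∀ v, IsHom (F.deg 1) 2 v → π v = C (coeff (xz n) (F.ε (F.d 0 v))) := by
    intro v hv
    rw [hρ, hπ, Finsupp.sum, Finsupp.sum, coeff_sum, map_sum]
    refine Finset.sum_congr rfl fun b hb => ?_
    by_cases h4 : F.deg 1 b = 2
    · have h5 : lam b = coeff (xz n) (h b) := if_pos h4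
      have h6 : v b = C (coeff 0 (v b)) := by
        ext m
        rw [coeff_C]
        split_ifs with hm
        · rw [hm]
        · by_contra hm'
          have := hv b m (by rwa [mem_support_iff])
          exact hm (mdeg_eq_zero (by omega)).symm
      rw [h5, h6, coeff_C_mul, C_mul]
    · rw [Finsupp.mem_support_iff] at hb
      obtain ⟨m, hm⟩ := MvPolynomial.ne_zero_iff.1 hb
      have h2 := hv b m (by rwa [mem_support_iff])
      have h5 : lam b = 0 := if_neg h4
      rw [h5, hlow b (by omega)]
      simp
  -- lifting
  have lift : ∀ f ∈ diamondIdeal K n, f.IsHomogeneous 2 →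
      ∃ v, IsHom (F.deg 1) 2 v ∧ F.d 0 v = Finsupp.single b0 (C c⁻¹ * f) ∧
        F.ε (F.d 0 v) = f := by
    intro f hf hf2
    have h1 : F.ε (Finsupp.single b0 (C c⁻¹ * f)) = f := by
      rw [(hε _).1, Finsupp.single_eq_same, ← mul_assoc, ← C_mul, mul_inv_cancel₀ hc, C_1, one_mul]
    have h2 : Finsupp.single b0 (C c⁻¹ * f) ∈ LinearMap.range (F.d 0) := by
      rw [F.exact0, Submodule.mem_comap, h1]
      exact hf
    obtain ⟨v, hv⟩ := h2
    have h3 : F.d 0 (cmp (F.deg 1) 2 v) = Finsupp.single b0 (C c⁻¹ * f) := by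
      rw [map_cmp (deg := F.deg 0) (F.d 0) (fun b c m hm => F.homog 0 b c m hm), hv]
      apply IsHom.cmp_self
      refine isHom_single (s := 2) _ _ ?_ (by omega)
      intro m hm
      rw [mem_support_iff, coeff_C_mul] at hm
      exact isHomogeneous_iff.1 hf2 m (by rw [mem_support_iff]; exact right_ne_zero_of_mul hm)
    exact ⟨_, isHom_cmp _ _ _, h3, by rw [h3, h1]⟩
  let i0 : Fin n := ⟨0, by omega⟩
  let i1 : Fin n := ⟨1, by omega⟩
  let i2 : Fin n := ⟨2, by omega⟩
  let f := yP K n i0 * yP K n i1 - xP K n * zP K n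
  let f' := yP K n i0 * yP K n i2 - xP K n * zP K n
  have hfg : f ∈ gens K n := ⟨i0, i1, by simp [i0, i1], rfl⟩
  have hfg' : f' ∈ gens K n := ⟨i0, i2, by simp [i0, i2], rfl⟩
  obtain ⟨v, hv, hdv, hεv⟩ := lift f (Ideal.subset_span hfg) (gens_hom hfg)
  obtain ⟨v', hv', hdv', hεv'⟩ := lift f' (Ideal.subset_span hfg') (gens_hom hfg')
  let κ := f • v' + -(f' • v)
  have hκ : IsHom (F.deg 1) 4 κ :=
    (hv'.smul (isHomogeneous_iff.1 (gens_hom hfg)) rfl).add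
      (hv.smul (isHomogeneous_iff.1 (gens_hom hfg')) rfl).neg
  have hdκ : κ ∈ LinearMap.ker (F.d 0) := by
    rw [LinearMap.mem_ker, map_add, map_neg, map_smul, map_smul, hdv, hdv', Finsupp.smul_single,
      Finsupp.smul_single, ← sub_eq_add_neg, ← Finsupp.single_sub]
    have : f • (C c⁻¹ * f') - f' • (C c⁻¹ * f) = 0 := by
      simp only [smul_eq_mul]; ring
    rw [this, Finsupp.single_zero]
  rw [← F.exact 0] at hdκ
  obtain ⟨w, hw⟩ := hdκ
  have hw' : F.d 1 (cmp (F.deg 2) 4 w) = κ := by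
    have hw2 : F.d 1 w = κ := hw
    rw [map_cmp (deg := F.deg 1) (F.d 1) (fun b c m hm => F.homog 1 b c m hm), hw2, hκ.cmp_self]
  have hwh := isHom_cmp (F.deg 2) 4 w
  generalize cmp (F.deg 2) 4 w = u at hw' hwh
  have hπκ : π κ = 0 := by
    rw [← hw', ← Finsupp.sum_single u, map_finsuppSum, map_finsuppSum]
    refine Finset.sum_eq_zero fun b hb => ?_
    have h1 : (Finsupp.single b (u b) : F.B 2 →₀ _) = u b • Finsupp.single b 1 := by
      rw [Finsupp.smul_single, smul_eq_mul, mul_one]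
    simp only
    rw [h1, map_smul, map_smul]
    rw [Finsupp.mem_support_iff] at hb
    obtain ⟨m, hm⟩ := MvPolynomial.ne_zero_iff.1 hb
    have h2 := hwh b m (by rwa [mem_support_iff])
    have h3 := hno b
    have h4 : F.d 1 (Finsupp.single b 1) ∈ LinearMap.ker (F.d 0) := by
      rw [← F.exact 0]; exact ⟨_, rfl⟩
    rw [claimA (F.d 1 (Finsupp.single b 1)) (F.deg 2 b) (by omega)
      (fun c m hm => F.homog 1 b c m hm) (fun c => F.minimal 1 b c)
      (by rw [LinearMap.mem_ker.1 h4, map_zero]), smul_zero]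
  have hcf : ∀ i j : Fin n, coeff (xz n) (yP K n i * yP K n j - xP K n * zP K n) = -1 := by
    intro i j
    rw [coeff_sub, coeff_yy, xP_mul_zP, coeff_monomial, if_pos rfl, zero_sub]
  have hκ2 : π κ = f * C (-1) - f' * C (-1) := by
    rw [map_add, map_neg, map_smul, map_smul, claimB v hv, claimB v' hv', hεv, hεv', hcf, hcf,
      sub_eq_add_neg]
    rfl
  rw [hπκ, C_neg, C_1] at hκ2
  have h7 : yP K n i0 * (yP K n i1 - yP K n i2) = 0 := by
    simp only [f, f'] at hκ2
    linear_combination hκ2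
  have h8 := (mul_eq_zero.1 h7).resolve_left (X_ne_zero _)
  have h9 := X_injective (sub_eq_zero.1 h8)
  simp [i1, i2, Fin.ext_iff] at h9

end main
end DiamondAux

/-- `β_{2,4}(S/I) > 0` for the diamond ideal; consequently `I`, which is generated in
degree `2`, is not linearly related (its minimal first syzygies are not all linear). -/
theorem diamond_not_linearly_related (K : Type*) [Field K] (n : ℕ) (hn : 3 ≤ n) :
    Nonempty (MinGradedFreeRes K (Fin (n + 2)) (diamondIdeal K n)) ∧
      ∀ F : MinGradedFreeRes K (Fin (n + 2)) (diamondIdeal K n),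
        0 < F.betti 2 4 ∧ ∃ b : F.B 2, 4 ≤ F.deg 2 b := by
  refine ⟨DiamondAux.exists_res _ (fun p hp j => DiamondAux.diamond_comp hp j)
    (fun p hp => DiamondAux.diamond_low hp 0 (by simp [mdeg])), fun F => ?_⟩
  obtain ⟨b, hb⟩ := DiamondAux.main_betti hn F
  refine ⟨?_, b, hb.ge⟩
  have := F.finB 2
  have : Nonempty {b : F.B 2 // F.deg 2 b = 4} := ⟨⟨b, hb⟩⟩
  exact Nat.card_pos
end

section
/- Let L be a finite modular non-distributive lattice and I_L ⊂ S = K[L] its join-meet ideal. Then the Castelnuovo–Mumford regularity of S/I_L is at least 3. -/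
open MvPolynomial

/-- The join-meet ideal `I_L` of a finite lattice `L`, generated by
`x_a x_b − x_{a∧b} x_{a∨b}` for incomparable `a, b ∈ L`. -/
noncomputable def joinMeetIdeal (K : Type*) [Field K] (L : Type*) [Lattice L] :
    Ideal (MvPolynomial L K) :=
  Ideal.span {f | ∃ a b : L, ¬ a ≤ b ∧ ¬ b ≤ a ∧ f = X a * X b - X (a ⊓ b) * X (a ⊔ b)}

/-- A diamond `M₃` with bottom `d`, top `e` and atoms `a, b, c`. -/
structure Diam {L : Type*} [Lattice L] (d a b c e : L) : Prop where
  lt : d < e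
  iab : a ⊓ b = d
  iac : a ⊓ c = d
  ibc : b ⊓ c = d
  sab : a ⊔ b = e
  sac : a ⊔ c = e
  sbc : b ⊔ c = e

theorem Diam.rot {L : Type*} [Lattice L] {d a b c e : L} (h : Diam d a b c e) : Diam d b c a e :=
  ⟨h.lt, h.ibc, by rw [inf_comm, h.iab], by rw [inf_comm, h.iac], h.sbc,
    by rw [sup_comm, h.sab], by rw [sup_comm, h.sac]⟩

theorem diam_inf_aux {L : Type*} [Lattice L] [IsModularLattice L] (x y z : L) :
    ((x ⊓ (y ⊔ z)) ⊔ (y ⊓ z)) ⊓ ((y ⊓ (z ⊔ x)) ⊔ (z ⊓ x)) = x ⊓ y ⊔ y ⊓ z ⊔ z ⊓ x := by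
  have h1 : z ⊓ x ≤ (x ⊓ (y ⊔ z)) ⊔ (y ⊓ z) :=
    le_sup_of_le_left (le_inf inf_le_right (inf_le_left.trans le_sup_right))
  have h2 : y ⊓ z ≤ y ⊓ (z ⊔ x) := le_inf inf_le_left (inf_le_right.trans le_sup_left)
  have h3 : (x ⊓ (y ⊔ z)) ⊓ (y ⊓ (z ⊔ x)) = x ⊓ y := by
    apply le_antisymm
    · exact le_inf (inf_le_left.trans inf_le_left) (inf_le_right.trans inf_le_left)
    · exact le_inf (le_inf inf_le_left (inf_le_right.trans le_sup_left))
        (le_inf inf_le_right (inf_le_left.trans le_sup_right))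
  rw [inf_comm, sup_comm (y ⊓ (z ⊔ x)), sup_inf_assoc_of_le _ h1,
    inf_comm (y ⊓ (z ⊔ x)), sup_comm (x ⊓ (y ⊔ z)), sup_inf_assoc_of_le _ h2, h3,
    sup_comm, sup_comm (y ⊓ z)]

theorem diam_sup_aux {L : Type*} [Lattice L] [IsModularLattice L] (x y z : L) :
    ((x ⊓ (y ⊔ z)) ⊔ (y ⊓ z)) ⊔ ((y ⊓ (z ⊔ x)) ⊔ (z ⊓ x)) = (x ⊔ y) ⊓ (y ⊔ z) ⊓ (z ⊔ x) := by
  have h := diam_inf_aux (L := Lᵒᵈ) (OrderDual.toDual x) (OrderDual.toDual y) (OrderDual.toDual z)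
  have h' : ((x ⊔ (y ⊓ z)) ⊓ (y ⊔ z)) ⊔ ((y ⊔ (z ⊓ x)) ⊓ (z ⊔ x)) =
    (x ⊔ y) ⊓ (y ⊔ z) ⊓ (z ⊔ x) := h
  rw [← h']
  congr 1
  · rw [sup_comm, ← sup_inf_assoc_of_le x (inf_le_left.trans le_sup_left), sup_comm]
  · rw [sup_comm, ← sup_inf_assoc_of_le y (inf_le_left.trans le_sup_left), sup_comm]

theorem exists_diam {L : Type*} [Lattice L] [IsModularLattice L]
    (hnd : ¬ ∀ x y z : L, x ⊓ (y ⊔ z) = (x ⊓ y) ⊔ (x ⊓ z)) : ∃ d a b c e : L, Diam d a b c e := by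
  push Not at hnd
  obtain ⟨x, y, z, hne⟩ := hnd
  refine ⟨x ⊓ y ⊔ y ⊓ z ⊔ z ⊓ x, (x ⊓ (y ⊔ z)) ⊔ (y ⊓ z), (y ⊓ (z ⊔ x)) ⊔ (z ⊓ x),
    (z ⊓ (x ⊔ y)) ⊔ (x ⊓ y), (x ⊔ y) ⊓ (y ⊔ z) ⊓ (z ⊔ x), ?_, diam_inf_aux x y z, ?_, ?_,
    diam_sup_aux x y z, ?_, ?_⟩
  · refine lt_of_le_of_ne ?_ ?_
    · rw [← diam_inf_aux, ← diam_sup_aux]; exact inf_le_left.trans le_sup_left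
    · intro h
      apply hne
      have h1 : (x ⊓ y ⊔ y ⊓ z ⊔ z ⊓ x) ⊓ x = x ⊓ y ⊔ x ⊓ z := by
        have : x ⊓ y ⊔ y ⊓ z ⊔ z ⊓ x = (x ⊓ y ⊔ x ⊓ z) ⊔ y ⊓ z := by
          rw [inf_comm z x, sup_right_comm]
        rw [this, sup_inf_assoc_of_le _ (sup_le inf_le_left inf_le_left)]
        apply sup_eq_left.2
        exact le_sup_of_le_left (le_inf inf_le_right (inf_le_left.trans inf_le_left))
      rw [← h1, h]
      apply le_antisymm
      · exact le_inf (le_inf (le_inf (inf_le_left.trans le_sup_left) inf_le_right)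
          (inf_le_left.trans le_sup_right)) inf_le_left
      · exact le_inf inf_le_right (inf_le_left.trans (inf_le_left.trans inf_le_right))
  · rw [inf_comm, diam_inf_aux z x y, sup_assoc, sup_comm]
  · rw [diam_inf_aux y z x, sup_comm, sup_assoc]
  · rw [sup_comm, diam_sup_aux z x y, inf_assoc, inf_comm]
  · rw [diam_sup_aux y z x, inf_comm, inf_assoc]

theorem Diam.shrink {L : Type*} [Lattice L] [IsModularLattice L] {d a b c e a' : L}
    (h : Diam d a b c e) (h1 : d < a') (h2 : a' < a) :
    ∃ b' c' e', e' < e ∧ Diam d a' b' c' e' := by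
  have hdb : d ≤ b := h.iab ▸ inf_le_right
  have hdc : d ≤ c := h.iac ▸ inf_le_right
  have hbe : b ≤ e := h.sab ▸ le_sup_right
  have hce : c ≤ e := h.sac ▸ le_sup_right
  have hae : a ≤ e := h.sac ▸ le_sup_left
  have s1 : a' ⊔ (a' ⊔ c) ⊓ b = (a' ⊔ b) ⊓ (a' ⊔ c) := by
    rw [inf_comm (a' ⊔ c) b, ← sup_inf_assoc_of_le b le_sup_left]
  have s2 : a' ⊔ (a' ⊔ b) ⊓ c = (a' ⊔ b) ⊓ (a' ⊔ c) := by
    rw [inf_comm (a' ⊔ b) c, ← sup_inf_assoc_of_le c le_sup_left, inf_comm]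
  refine ⟨(a' ⊔ c) ⊓ b, (a' ⊔ b) ⊓ c, (a' ⊔ b) ⊓ (a' ⊔ c), ?_, ?_, ?_, ?_, ?_, s1, s2, ?_⟩
  · refine lt_of_le_of_ne (inf_le_left.trans (sup_le (h2.le.trans hae) hbe)) ?_
    intro he
    have : e ≤ a' ⊔ b := he ▸ inf_le_left
    have h3 : (a' ⊔ b) ⊓ a = a' := by
      rw [sup_inf_assoc_of_le b h2.le, inf_comm, h.iab, sup_eq_left.2 h1.le]
    have : a ≤ a' := h3 ▸ le_inf (hae.trans this) le_rfl
    exact absurd this h2.not_ge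
  · exact h1.trans_le (le_inf le_sup_left le_sup_left)
  · apply le_antisymm
    · rw [← h.iab]; exact inf_le_inf h2.le inf_le_right
    · exact le_inf h1.le (le_inf (h1.le.trans le_sup_left) hdb)
  · apply le_antisymm
    · rw [← h.iac]; exact inf_le_inf h2.le inf_le_right
    · exact le_inf h1.le (le_inf (h1.le.trans le_sup_left) hdc)
  · apply le_antisymm
    · rw [← h.ibc]; exact inf_le_inf inf_le_right inf_le_right
    · exact le_inf (le_inf (h1.le.trans le_sup_left) hdb) (le_inf (h1.le.trans le_sup_left) hdc)
  · have h4 : (a' ⊔ c) ⊓ b ≤ a' ⊔ b := inf_le_right.trans le_sup_right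
    rw [inf_comm (a' ⊔ b) c, ← sup_inf_assoc_of_le c h4]
    rw [sup_comm ((a' ⊔ c) ⊓ b) c, inf_comm (a' ⊔ c) b, ← sup_inf_assoc_of_le b le_sup_right,
      sup_comm c b, h.sbc, inf_eq_right.2 (sup_le (h2.le.trans hae) hce), inf_comm]

theorem exists_cov_diam {L : Type*} [Lattice L] [Finite L] [IsModularLattice L]
    (hnd : ¬ ∀ x y z : L, x ⊓ (y ⊔ z) = (x ⊓ y) ⊔ (x ⊓ z)) :
    ∃ u v a b c : L, u < a ∧ a < v ∧ u < b ∧ b < v ∧ u < c ∧ c < v ∧ a ≠ b ∧ a ≠ c ∧ b ≠ c ∧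
      ∀ x y, u < x → x < v → u < y → y < v → x ≠ y → x ⊓ y = u ∧ x ⊔ y = v := by
  obtain ⟨d, a, b, c, e, h0⟩ := exists_diam hnd
  obtain ⟨e, ⟨d, a, b, c, h⟩, hmin⟩ :=
    (wellFounded_lt (α := L)).has_min {e | ∃ d a b c : L, Diam d a b c e} ⟨e, d, a, b, c, h0⟩
  have key : ∀ {d a b c : L}, Diam d a b c e → d ⋖ a := by
    intro d a b c h
    refine ⟨lt_of_le_of_ne (h.iab ▸ inf_le_left) ?_, ?_⟩
    · intro hda
      have hb : b = e := by
        rw [← h.sab, sup_eq_right.2]; rw [← hda, ← h.iab]; exact inf_le_right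
      have hc : c = e := by
        rw [← h.sac, sup_eq_right.2]; rw [← hda, ← h.iac]; exact inf_le_right
      have := h.ibc
      rw [hb, hc, inf_idem] at this
      exact h.lt.ne this.symm
    · intro a' h1 h2
      obtain ⟨b', c', e', he, hd⟩ := h.shrink h1 h2
      exact hmin e' ⟨d, a', b', c', hd⟩ he
  have ka := key h
  have kb := key h.rot
  have kc := key h.rot.rot
  have ca : a ⋖ e := by
    have := IsUpperModularLattice.covBy_sup_of_inf_covBy (a := b) (b := a)
      (by rw [inf_comm, h.iab]; exact kb)
    rwa [sup_comm, h.sab] at this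
  have cb : b ⋖ e := by
    have := IsUpperModularLattice.covBy_sup_of_inf_covBy (a := a) (b := b)
      (by rw [h.iab]; exact ka)
    rwa [h.sab] at this
  have cc : c ⋖ e := by
    have := IsUpperModularLattice.covBy_sup_of_inf_covBy (a := a) (b := c)
      (by rw [h.iac]; exact ka)
    rwa [h.sac] at this
  have hx : ∀ x, d < x → x < e → d ⋖ x ∧ x ⋖ e := by
    intro x h1 h2
    by_cases hxa : x = a
    · subst hxa; exact ⟨ka, ca⟩
    have i1 : a ⊓ x = d := by
      rcases ka.eq_or_eq (le_inf ka.le h1.le) inf_le_left with h3 | h3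
      · exact h3
      · rcases ca.eq_or_eq (inf_eq_left.1 h3) h2.le with h4 | h4
        · exact absurd h4 hxa
        · exact absurd h4 h2.ne
    have s1 : a ⊔ x = e := by
      rcases ca.eq_or_eq (le_sup_left (a := a) (b := x)) (sup_le ca.le h2.le) with h3 | h3
      · have : x ≤ a := sup_eq_left.1 h3
        have h5 := inf_eq_right.2 this
        rw [i1] at h5
        exact absurd h5 h1.ne
      · exact h3
    constructor
    · have := IsLowerModularLattice.inf_covBy_of_covBy_sup (a := a) (b := x) (by rw [s1]; exact ca)
      rwa [i1] at this
    · have := IsUpperModularLattice.covBy_sup_of_inf_covBy (a := a) (b := x) (by rw [i1]; exact ka)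
      rwa [s1] at this
  have ne : ∀ {p q : L}, d ⋖ p → p ⊓ q = d → p ≠ q := by
    intro p q h1 h2 h3
    rw [← h3, inf_idem] at h2
    exact h1.lt.ne h2.symm
  refine ⟨d, e, a, b, c, ka.lt, ca.lt, kb.lt, cb.lt, kc.lt, cc.lt, ne ka h.iab, ne ka h.iac,
    ne kb h.ibc, ?_⟩
  intro x y x1 x2 y1 y2 hxy
  obtain ⟨hx1, hx2⟩ := hx x x1 x2
  constructor
  · rcases hx1.eq_or_eq (le_inf x1.le y1.le) (inf_le_left (a := x) (b := y)) with h3 | h3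
    · exact h3
    · rcases hx2.eq_or_eq (inf_eq_left.1 h3) y2.le with h4 | h4
      · exact absurd h4.symm hxy
      · exact absurd h4 y2.ne
  · rcases hx2.eq_or_eq (le_sup_left (a := x) (b := y)) (sup_le x2.le y2.le) with h3 | h3
    · rcases hx1.eq_or_eq y1.le (sup_eq_left.1 h3) with h4 | h4
      · exact absurd h4 y1.ne'
      · exact absurd h4.symm hxy
    · exact h3


section Core

/-- The monomial ideal generated by the fourth powers of the variables in `T`. -/
noncomputable def fourIdeal (k : Type*) [Field k] {P : Type*} (T : Set P) :
    Ideal (MvPolynomial P k) :=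
  Ideal.span (Set.image (fun s => monomial s (1 : k)) (Set.image (fun p => Finsupp.single p 4) T))

theorem mem_fourIdeal {k : Type*} [Field k] {P : Type*} {T : Set P} {x : MvPolynomial P k} :
    x ∈ fourIdeal k T ↔ ∀ m ∈ x.support, ∃ p ∈ T, 4 ≤ m p := by
  unfold fourIdeal
  rw [mem_ideal_span_monomial_image]
  simp

theorem fourIdeal_mono {k : Type*} [Field k] {P : Type*} {T T' : Set P} (h : T ⊆ T') :
    fourIdeal k T ≤ fourIdeal k T' := by
  intro x hx
  rw [mem_fourIdeal] at hx ⊢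
  intro m hm
  obtain ⟨p, hp, h4⟩ := hx m hm
  exact ⟨p, h hp, h4⟩

theorem X_pow_mem_fourIdeal (k : Type*) [Field k] {P : Type*} {T : Set P} {p : P} (h : p ∈ T) :
    (X p ^ 4 : MvPolynomial P k) ∈ fourIdeal k T := by
  apply Ideal.subset_span
  exact ⟨_, ⟨p, h, rfl⟩, by simp [X_pow_eq_monomial]⟩

theorem fourIdeal_insert {k : Type*} [Field k] {P : Type*} {T : Set P} {p : P}
    {x : MvPolynomial P k} (h : x ∈ fourIdeal k (insert p T)) :
    ∃ y, x - X p ^ 4 * y ∈ fourIdeal k T := by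
  unfold fourIdeal at h
  rw [Set.image_insert_eq, Set.image_insert_eq, Ideal.mem_span_insert] at h
  obtain ⟨a, z, hz, rfl⟩ := h
  refine ⟨a, ?_⟩
  have : a * monomial (Finsupp.single p 4) (1 : k) + z - X p ^ 4 * a = z := by
    rw [X_pow_eq_monomial]; ring
  rw [this]
  exact hz

theorem fourIdeal_regular {k : Type*} [Field k] {P : Type*} {T : Set P} {p : P} (hp : p ∉ T)
    {x : MvPolynomial P k} (h : X p ^ 4 * x ∈ fourIdeal k T) : x ∈ fourIdeal k T := by
  classical
  rw [mem_fourIdeal] at h ⊢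
  intro m hm
  obtain ⟨q, hq, h4⟩ := h (Finsupp.single p 4 + m) (by
    rw [mem_support_iff, X_pow_eq_monomial, coeff_monomial_mul, one_mul]
    exact mem_support_iff.1 hm)
  refine ⟨q, hq, ?_⟩
  have : p ≠ q := fun h => hp (h ▸ hq)
  simpa [Finsupp.single_apply, this] using h4

theorem mem_fourIdeal_of_pow {k : Type*} [Field k] {P : Type*} [Fintype P]
    {x : MvPolynomial P k} {N : ℕ} (hN : 3 * Fintype.card P < N)
    (h : x ∈ idealOfVars P k ^ N) : x ∈ fourIdeal k (Set.univ : Set P) := by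
  rw [mem_fourIdeal]
  intro m hm
  rw [mem_pow_idealOfVars_iff] at h
  have h1 := h m hm
  by_contra hc
  push Not at hc
  have h2 : m.degree ≤ ∑ p : P, 3 := by
    rw [Finsupp.degree_eq_sum]
    exact Finset.sum_le_sum fun p _ => Nat.le_of_lt_succ (hc p (Set.mem_univ p))
  simp at h2
  omega

variable {k : Type*} [Field k] {P : Type*} {B : ℕ → Type} [∀ i, Fintype (B i)]
  [∀ i, DecidableEq (B i)]

/-- `g` acts null-homotopically (with a homotopy of degree `e`) on the complex given by the
matrices `D`. -/
def Hty (D : ∀ i, Matrix (B (i + 1)) (B i) (MvPolynomial P k)) (deg : ∀ i, B i → ℕ)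
    (e : ℕ) (g : MvPolynomial P k) : Prop :=
  ∃ H : ∀ i, Matrix (B i) (B (i + 1)) (MvPolynomial P k),
    H 0 * D 0 = g • (1 : Matrix (B 0) (B 0) (MvPolynomial P k)) ∧
    (∀ i, H (i + 1) * D (i + 1) + D i * H i =
      g • (1 : Matrix (B (i + 1)) (B (i + 1)) (MvPolynomial P k))) ∧
    ∀ i b c, H i b c ∈ idealOfVars P k ^ (deg i b + e - deg (i + 1) c)

/-- Iterated homotopies applied to an element. -/
noncomputable def hchain (H : P → ∀ i, Matrix (B i) (B (i + 1)) (MvPolynomial P k))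
    (e : B 0 → MvPolynomial P k) : (l : List P) → (B l.length → MvPolynomial P k)
  | [] => e
  | p :: l => Matrix.vecMul (hchain H e l) (H p l.length)

theorem vecMul_mem {k : Type*} [Field k] {P : Type*} {B : ℕ → Type} [∀ i, Fintype (B i)]
    {i j : ℕ} {J : Ideal (MvPolynomial P k)} {v : B i → MvPolynomial P k}
    (h : ∀ b, v b ∈ J) (M : Matrix (B i) (B j) (MvPolynomial P k)) (b : B j) :
    Matrix.vecMul v M b ∈ J := by
  simp only [Matrix.vecMul, dotProduct]
  exact Ideal.sum_mem _ fun c _ => Ideal.mul_mem_right _ _ (h c)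

variable {D : ∀ i, Matrix (B (i + 1)) (B i) (MvPolynomial P k)}
  {H : P → ∀ i, Matrix (B i) (B (i + 1)) (MvPolynomial P k)}

theorem vecMul_aux1 {p : P} {i : ℕ}
    (h1 : H p (i + 1) * D (i + 1) + D i * H p i = (X p ^ 4 : MvPolynomial P k) • 1)
    (v : B (i + 1) → MvPolynomial P k) :
    Matrix.vecMul (Matrix.vecMul v (H p (i + 1))) (D (i + 1)) =
      (X p ^ 4 : MvPolynomial P k) • v - Matrix.vecMul (Matrix.vecMul v (D i)) (H p i) := by
  rw [Matrix.vecMul_vecMul, Matrix.vecMul_vecMul, eq_sub_iff_add_eq, ← Matrix.vecMul_add, h1,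
    Matrix.vecMul_smul, Matrix.vecMul_one]

theorem vecMul_aux2 {k : Type*} [Field k] {P : Type*} {B : ℕ → Type} [∀ i, Fintype (B i)]
    {D : ∀ i, Matrix (B (i + 1)) (B i) (MvPolynomial P k)}
    {i : ℕ} (hD : D (i + 1) * D i = 0) (u g : MvPolynomial P k)
    (c z : B (i + 1) → MvPolynomial P k) (y : B (i + 1 + 1) → MvPolynomial P k) :
    Matrix.vecMul (u • c - Matrix.vecMul y (D (i + 1)) - g • z) (D i) =
      u • Matrix.vecMul c (D i) - g • Matrix.vecMul z (D i) := by
  rw [Matrix.sub_vecMul, Matrix.sub_vecMul, Matrix.smul_vecMul, Matrix.smul_vecMul,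
    Matrix.vecMul_vecMul, hD, Matrix.vecMul_zero, sub_zero]

theorem hchain_bdry
    (h0 : ∀ p, H p 0 * D 0 = (X p ^ 4 : MvPolynomial P k) • 1)
    (h1 : ∀ p i, H p (i + 1) * D (i + 1) + D i * H p i = (X p ^ 4 : MvPolynomial P k) • 1)
    (e : B 0 → MvPolynomial P k) (l : List P) :
    ∀ p b, Matrix.vecMul (hchain H e (p :: l)) (D l.length) b - X p ^ 4 * hchain H e l b ∈
      fourIdeal k {q | q ∈ l} := by
  induction l with
  | nil =>
    intro p b
    simp only [hchain, List.length_nil]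
    erw [Matrix.vecMul_vecMul, h0, Matrix.vecMul_smul, Matrix.vecMul_one]
    simp
  | cons q l ih =>
    intro p b
    have e2 : Matrix.vecMul (hchain H e (p :: q :: l)) (D (l.length + 1)) =
        (X p ^ 4 : MvPolynomial P k) • hchain H e (q :: l) -
        Matrix.vecMul (Matrix.vecMul (hchain H e (q :: l)) (D l.length)) (H p l.length) := by
      exact vecMul_aux1 (h1 p l.length) (hchain H e (q :: l))
    have e3 : Matrix.vecMul (hchain H e (p :: q :: l)) (D (q :: l).length) b
        - X p ^ 4 * hchain H e (q :: l) b = 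
        - Matrix.vecMul (Matrix.vecMul (hchain H e (q :: l)) (D l.length)) (H p l.length) b := by
      have := congrFun e2 b
      simp only [Pi.sub_apply, Pi.smul_apply, smul_eq_mul] at this
      erw [this]
      ring
    rw [e3]
    apply neg_mem
    apply vecMul_mem
    intro c
    have := ih q c
    have h5 := add_mem (fourIdeal_mono (T' := {r | r ∈ q :: l})
      (fun r hr => List.mem_cons_of_mem _ hr) this)
      (Ideal.mul_mem_right (hchain H e l c) _ (X_pow_mem_fourIdeal k
        (T := {r | r ∈ q :: l}) (p := q) (by simp)))
    simpa using h5

theorem hchain_descend (hD : ∀ i, D (i + 1) * D i = 0)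
    (h0 : ∀ p, H p 0 * D 0 = (X p ^ 4 : MvPolynomial P k) • 1)
    (h1 : ∀ p i, H p (i + 1) * D (i + 1) + D i * H p i = (X p ^ 4 : MvPolynomial P k) • 1)
    (e : B 0 → MvPolynomial P k) (u : MvPolynomial P k) (l : List P) (hl : l.Nodup) :
    (∃ y : B (l.length + 1) → MvPolynomial P k, ∀ b,
      u * hchain H e l b - Matrix.vecMul y (D l.length) b ∈ fourIdeal k {q | q ∈ l}) →
    ∃ y : B 1 → MvPolynomial P k, u • e = Matrix.vecMul y (D 0) := by
  induction l with
  | nil =>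
    rintro ⟨y, hy⟩
    refine ⟨y, funext fun b => ?_⟩
    have := hy b
    have h2 : u * hchain H e [] b - Matrix.vecMul y (D 0) b = 0 := by
      rw [mem_fourIdeal] at this
      rw [← support_eq_empty]
      refine Finset.eq_empty_of_forall_notMem fun m hm => ?_
      obtain ⟨p, hp, _⟩ := this m hm
      simp at hp
    exact sub_eq_zero.1 h2
  | cons p l ih =>
    rintro ⟨y, hy⟩
    have hp : p ∉ l := (List.nodup_cons.1 hl).1
    apply ih (List.nodup_cons.1 hl).2
    have hset : {q | q ∈ p :: l} = insert p {q | q ∈ l} := by ext; simp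
    rw [hset] at hy
    choose z hz using fun b => fourIdeal_insert (hy b)
    refine ⟨z, fun b => fourIdeal_regular (p := p) hp ?_⟩
    have a1 := vecMul_mem hz (D l.length) b
    have a2 : Matrix.vecMul (fun b => u * hchain H e (p :: l) b -
        Matrix.vecMul y (D (p :: l).length) b - X p ^ 4 * z b) (D l.length) =
        u • Matrix.vecMul (hchain H e (p :: l)) (D l.length) -
          (X p ^ 4 : MvPolynomial P k) • Matrix.vecMul z (D l.length) := by
      exact vecMul_aux2 (hD l.length) u (X p ^ 4) (hchain H e (p :: l)) z y
    rw [a2] at a1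
    have a3 := Ideal.mul_mem_left _ u (hchain_bdry h0 h1 e l p b)
    have a4 := sub_mem a1 a3
    simp only [Pi.sub_apply, Pi.smul_apply, smul_eq_mul] at a4
    convert a4 using 1
    ring

theorem hchain_order {k : Type*} [Field k] {P : Type*} {B : ℕ → Type} [∀ i, Fintype (B i)]
    {H : P → ∀ i, Matrix (B i) (B (i + 1)) (MvPolynomial P k)} {deg : ∀ i, B i → ℕ}
    (h2 : ∀ p i b b', H p i b b' ∈ idealOfVars P k ^ (deg i b + 4 - deg (i + 1) b'))
    (e : B 0 → MvPolynomial P k) (l : List P) :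
    ∀ b, hchain H e l b ∈ idealOfVars P k ^ (4 * l.length - deg l.length b) := by
  induction l with
  | nil => intro b; simp
  | cons p l ih =>
    intro b
    simp only [hchain, Matrix.vecMul, dotProduct]
    refine Ideal.sum_mem _ fun c _ => ?_
    have := Ideal.mul_mem_mul (ih c) (h2 p l.length c b)
    rw [← pow_add] at this
    refine Ideal.pow_le_pow_right ?_ this
    simp only [List.length_cons]
    omega

theorem core_lemma [Fintype P] {deg : ∀ i, B i → ℕ} (hD : ∀ i, D (i + 1) * D i = 0)
    (hH : ∀ p, Hty D deg 4 (X p ^ 4)) (u : MvPolynomial P k) (hu : u ∈ idealOfVars P k ^ 3)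
    (hdeg : ∀ b : B (Fintype.card P), deg _ b < Fintype.card P + 3)
    (e : B 0 → MvPolynomial P k) :
    ∃ y : B 1 → MvPolynomial P k, u • e = Matrix.vecMul y (D 0) := by
  choose H h0 h1 h2 using hH
  have hlen : (Finset.univ : Finset P).toList.length = Fintype.card P := by simp
  refine hchain_descend hD h0 h1 e u (Finset.univ : Finset P).toList (Finset.nodup_toList _)
    ⟨0, fun b => ?_⟩
  have hset : {q | q ∈ (Finset.univ : Finset P).toList} = Set.univ := by ext; simp
  rw [hset, Matrix.zero_vecMul, Pi.zero_apply, sub_zero]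
  have h3 := Ideal.mul_mem_mul hu (hchain_order h2 e _ b)
  rw [← pow_add] at h3
  refine mem_fourIdeal_of_pow ?_ h3
  have hd : ∀ n, n = Fintype.card P → ∀ b : B n, deg n b < Fintype.card P + 3 := by
    rintro n rfl b; exact hdeg b
  have := hd _ hlen b
  omega

end Core

section Alg

theorem four_mem {k : Type*} [Field k] {P : Type*} [Fintype P]
    (Q : ℕ → AddSubgroup (MvPolynomial P k))
    (hmul : ∀ a e r g, r ∈ idealOfVars P k ^ a → g ∈ Q e → r * g ∈ Q (a + e))
    (th : k) (hth : th ≠ 0) (hth' : 1 - th * (Fintype.card P : k) ^ 2 ≠ 0)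
    (h3 : ∀ i j : P, ∃ l : P, l ≠ i ∧ l ≠ j)
    (hq : ∀ i j : P, i ≠ j → (X i * X j - C th * (∑ l : P, X l) ^ 2 : MvPolynomial P k) ∈ Q 2)
    (p : P) : (X p ^ 4 : MvPolynomial P k) ∈ Q 4 := by
  set s : MvPolynomial P k := ∑ l : P, X l with hs
  set t : MvPolynomial P k := C th * s ^ 2 with ht
  have hX : ∀ i : P, (X i : MvPolynomial P k) ∈ idealOfVars P k ^ 1 := fun i => by
    rw [pow_one]; exact Ideal.subset_span ⟨i, rfl⟩
  have hXX : ∀ i j : P, (X i * X j : MvPolynomial P k) ∈ idealOfVars P k ^ 2 := fun i j => by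
    have := Ideal.mul_mem_mul (hX i) (hX j)
    rwa [← pow_add] at this
  have hs1 : s ∈ idealOfVars P k ^ 1 := Ideal.sum_mem _ fun i _ => hX i
  have ht2 : t ∈ idealOfVars P k ^ 2 := by
    have := Ideal.mul_mem_mul hs1 hs1
    rw [← pow_add] at this
    rw [ht, pow_two s]
    exact Ideal.mul_mem_left _ _ this
  have hC : ∀ (c : k) {e : ℕ} {g : MvPolynomial P k}, g ∈ Q e → C c * g ∈ Q e := by
    intro c e g hg
    have := hmul 0 e (C c) g (by simp) hg
    rwa [zero_add] at this
  -- degree three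
  have d3 : ∀ i l : P, X i * t - X l * t ∈ Q 3 := by
    intro i l
    by_cases hil : i = l
    · subst hil; simp
    obtain ⟨j, hji, hjl⟩ := h3 i l
    have e1 := hmul 1 2 _ _ (hX l) (hq i j (Ne.symm hji))
    have e2 := hmul 1 2 _ _ (hX i) (hq j l hjl)
    have := sub_mem e1 e2
    convert this using 1
    ring
  have d4 : ∀ i l : P, X i * X l * t - t ^ 2 ∈ Q 4 := by
    intro i l
    have key : ∀ i l : P, i ≠ l → X i * X l * t - t ^ 2 ∈ Q 4 := by
      intro i l hil
      have := hmul 2 2 _ _ ht2 (hq i l hil)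
      convert this using 1
      ring
    by_cases hil : i = l
    · subst hil
      obtain ⟨j, hji, -⟩ := h3 i i
      have e1 := hmul 1 3 _ _ (hX i) (d3 i j)
      have e2 := key i j (Ne.symm hji)
      have := add_mem e1 e2
      convert this using 1
      ring
    · exact key i l hil
  have d5 : s ^ 2 * t - ((Fintype.card P : k) ^ 2 : k) • t ^ 2 ∈ Q 4 := by
    have : s ^ 2 * t - ((Fintype.card P : k) ^ 2 : k) • t ^ 2 =
        ∑ i : P, ∑ l : P, (X i * X l * t - t ^ 2) := by
      simp only [Finset.sum_sub_distrib, Finset.sum_const, Finset.card_univ, ← Finset.sum_mul,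
        ← Finset.mul_sum]
      rw [← hs, smul_eq_C_mul]
      simp only [nsmul_eq_mul, map_pow, map_natCast]
      ring
    rw [this]
    exact sum_mem fun i _ => sum_mem fun l _ => d4 i l
  have ht22 : t ^ 2 ∈ Q 4 := by
    have e1 := hC (-(1 - th * (Fintype.card P : k) ^ 2)⁻¹ * -1) (hC th d5)
    have e2 : t ^ 2 = C th * (s ^ 2 * t) := by rw [ht]; ring
    have e3 : C th * (s ^ 2 * t - ((Fintype.card P : k) ^ 2 : k) • t ^ 2) =
        C (1 - th * (Fintype.card P : k) ^ 2) * t ^ 2 := by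
      rw [mul_sub, ← e2, smul_eq_C_mul]
      simp only [map_sub, map_mul, map_one]
      ring
    rw [e3, ← mul_assoc, ← C_mul] at e1
    have e4 : -(1 - th * (Fintype.card P : k) ^ 2)⁻¹ * -1 * (1 - th * (Fintype.card P : k) ^ 2)
        = 1 := by
      field_simp
    rwa [e4, C_1, one_mul] at e1
  have d6 : ∀ i l : P, X i * X l * t ∈ Q 4 := fun i l => by
    simpa using add_mem (d4 i l) ht22
  have d7 : ∀ j l : P, j ≠ p → X j * X l * X p ^ 2 ∈ Q 4 := by
    intro j l hj
    have e1 := hmul 2 2 _ _ (hXX l p) (hq j p hj)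
    have := add_mem e1 (d6 l p)
    convert this using 1
    ring
  have d8 : s ^ 2 * X p ^ 2 ∈ Q 4 := by
    have := hC th⁻¹ (d6 p p)
    convert this using 1
    have e5 : (C th⁻¹ * C th : MvPolynomial P k) = 1 := by
      rw [← C_mul, inv_mul_cancel₀ hth, C_1]
    rw [ht]
    linear_combination (-(X p ^ 2 * s ^ 2)) * e5
  have d9 : s ^ 2 * X p ^ 2 = ∑ j : P, ∑ l : P, X j * X l * X p ^ 2 := by
    simp only [← Finset.sum_mul, ← Finset.mul_sum]
    rw [← hs]; ring
  classical
  rw [d9, Finset.sum_eq_add_sum_sdiff_singleton_of_mem (Finset.mem_univ p),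
    Finset.sum_eq_add_sum_sdiff_singleton_of_mem (Finset.mem_univ p)] at d8
  have r1 : ∑ l ∈ Finset.univ \ {p}, X p * X l * X p ^ 2 ∈ Q 4 := by
    refine sum_mem fun l hl => ?_
    have := d7 l p (by simpa using hl)
    convert this using 1
    ring
  have r2 : ∑ j ∈ Finset.univ \ {p}, ∑ l : P, X j * X l * X p ^ 2 ∈ Q 4 :=
    sum_mem fun j hj => sum_mem fun l _ => d7 j l (by simpa using hj)
  have := sub_mem (sub_mem d8 r2) r1
  convert this using 1
  ring

/-- The functional detecting the degree three part. -/
noncomputable def lam {k : Type*} [Field k] {P : Type*} [Fintype P] [DecidableEq P] (th : k)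
    (f : MvPolynomial P k) : k :=
  th * (aeval (fun _ : P => (Polynomial.X : Polynomial k)) f).coeff 3 +
    (1 - th * (Fintype.card P : k) ^ 2) *
    ∑ l : P, (aeval (fun i : P => if i = l then (Polynomial.X : Polynomial k) else 0) f).coeff 3

theorem coeff_zero_aeval {k : Type*} [Field k] {P : Type*} (a : P → Polynomial k)
    (ha : ∀ i, (a i).coeff 0 = 0) (f : MvPolynomial P k) :
    (aeval a f).coeff 0 = constantCoeff f := by
  induction f using MvPolynomial.induction_on with
  | C c => simp
  | add p q hp hq => simp [hp, hq]
  | mul_X p i hp => simp [Polynomial.mul_coeff_zero, ha]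

theorem coeff_one_aeval {k : Type*} [Field k] {P : Type*} [Fintype P] [DecidableEq P]
    (f : MvPolynomial P k) :
    (aeval (fun _ : P => (Polynomial.X : Polynomial k)) f).coeff 1 =
    ∑ l : P, (aeval (fun i : P => if i = l then (Polynomial.X : Polynomial k) else 0) f).coeff 1 := by
  induction f using MvPolynomial.induction_on with
  | C c => simp
  | add p q hp hq => simp [hp, hq, Finset.sum_add_distrib]
  | mul_X p i hp =>
    simp only [map_mul, aeval_X]
    rw [Polynomial.coeff_mul_X, coeff_zero_aeval _ (by simp), Finset.sum_eq_single i]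
    · rw [if_pos rfl, Polynomial.coeff_mul_X, coeff_zero_aeval]
      intro j
      split_ifs <;> simp
    · intro l _ hl
      rw [if_neg (Ne.symm hl)]; simp
    · simp

theorem lam_add {k : Type*} [Field k] {P : Type*} [Fintype P] [DecidableEq P] (th : k)
    (f g : MvPolynomial P k) : lam th (f + g) = lam th f + lam th g := by
  simp only [lam, map_add, Polynomial.coeff_add, Finset.sum_add_distrib]
  ring

theorem lam_zero {k : Type*} [Field k] {P : Type*} [Fintype P] [DecidableEq P] (th : k) :
    lam th (0 : MvPolynomial P k) = 0 := by
  simp [lam]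

theorem lam_mul {k : Type*} [Field k] {P : Type*} [Fintype P] [DecidableEq P] (th : k)
    (r : MvPolynomial P k) {i j : P} (hij : i ≠ j) :
    lam th (r * (X i * X j - C th * (∑ l : P, X l) ^ 2)) = 0 := by
  have e1 : aeval (fun _ : P => (Polynomial.X : Polynomial k))
      (r * (X i * X j - C th * (∑ l : P, X l) ^ 2)) =
      Polynomial.C (1 - th * (Fintype.card P : k) ^ 2) *
        (aeval (fun _ : P => (Polynomial.X : Polynomial k)) r * Polynomial.X ^ 2) := by
    simp only [map_mul, map_sub, map_pow, map_sum, aeval_X, algHom_C, Finset.sum_const,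
      Finset.card_univ, nsmul_eq_mul, Polynomial.algebraMap_apply, map_one, map_natCast,
      Algebra.algebraMap_self, RingHom.id_apply]
    ring
  have e2 : ∀ l : P, aeval (fun i : P => if i = l then (Polynomial.X : Polynomial k) else 0)
      (r * (X i * X j - C th * (∑ l : P, X l) ^ 2)) =
      Polynomial.C (-th) *
        (aeval (fun i : P => if i = l then (Polynomial.X : Polynomial k) else 0) r
          * Polynomial.X ^ 2) := by
    intro l
    have : ((if i = l then (Polynomial.X : Polynomial k) else 0) *
      if j = l then (Polynomial.X : Polynomial k) else 0) = 0 := by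
      split_ifs with h1 h2
      · exact absurd (h1.trans h2.symm) hij
      all_goals simp
    simp only [map_mul, map_sub, map_pow, map_sum, aeval_X, algHom_C, this,
      Polynomial.algebraMap_apply, map_neg, Finset.sum_ite_eq', Finset.mem_univ, if_true,
      Algebra.algebraMap_self, RingHom.id_apply]
    ring
  have h3 : ∀ q : Polynomial k, (q * Polynomial.X ^ 2).coeff 3 = q.coeff 1 := fun q =>
    Polynomial.coeff_mul_X_pow q 2 1
  simp only [lam, e1, e2, Polynomial.coeff_C_mul, h3]
  rw [coeff_one_aeval, ← Finset.mul_sum]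
  ring

theorem lam_u {k : Type*} [Field k] {P : Type*} [Fintype P] [DecidableEq P] (th : k)
    {a b : P} (c : P) (hab : a ≠ b) : lam th (X a * X b * X c) = th := by
  have e2 : ∀ l : P, aeval (fun i : P => if i = l then (Polynomial.X : Polynomial k) else 0)
      (X a * X b * X c : MvPolynomial P k) = 0 := by
    intro l
    have : ((if a = l then (Polynomial.X : Polynomial k) else 0) *
      if b = l then (Polynomial.X : Polynomial k) else 0) = 0 := by
      split_ifs with h1 h2
      · exact absurd (h1.trans h2.symm) hab
      all_goals simp
    simp only [map_mul, aeval_X, this, zero_mul]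
  have e1 : (Polynomial.X * Polynomial.X * Polynomial.X : Polynomial k) = Polynomial.X ^ 3 := by
    ring
  simp only [lam, e2, map_mul, aeval_X, e1, Polynomial.coeff_X_pow]
  simp

end Alg
section Grading

variable {K : Type*} [Field K] {σ : Type*}

theorem mdeg_add (x y : σ →₀ ℕ) : mdeg (x + y) = mdeg x + mdeg y :=
  Finsupp.sum_add_index' (fun _ => rfl) (fun _ _ _ => rfl)

theorem mdeg_eq_degree (x : σ →₀ ℕ) : mdeg x = x.degree := rfl

theorem mdeg_eq_zero {x : σ →₀ ℕ} (h : mdeg x = 0) : x = 0 := by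
  rw [mdeg_eq_degree] at h
  exact (Finsupp.degree_eq_zero_iff x).1 h

/-- The homogeneous component of degree `E` of an element of a graded free module. -/
noncomputable def gcomp {B : Type*} (deg : B → ℕ) (E : ℕ) (w : B →₀ MvPolynomial σ K) :
    B →₀ MvPolynomial σ K :=
  Finsupp.onFinset w.support
    (fun c => if deg c ≤ E then homogeneousComponent (E - deg c) (w c) else 0)
    (by
      intro c hc
      rw [Finsupp.mem_support_iff]
      intro h
      apply hc
      simp [h])

theorem coeff_gcomp {B : Type*} (deg : B → ℕ) (E : ℕ) (w : B →₀ MvPolynomial σ K) (c : B)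
    (m : σ →₀ ℕ) :
    coeff m (gcomp deg E w c) = if mdeg m + deg c = E then coeff m (w c) else 0 := by
  simp only [gcomp, Finsupp.onFinset_apply]
  rw [mdeg_eq_degree]
  by_cases h : deg c ≤ E
  · rw [if_pos h, coeff_homogeneousComponent]
    congr 1
    apply propext
    omega
  · rw [if_neg h, if_neg (by omega), coeff_zero]

/-- Homogeneity of a vector. -/
def IsHom {B : Type*} (deg : B → ℕ) (E : ℕ) (w : B →₀ MvPolynomial σ K) : Prop :=
  ∀ c, ∀ m ∈ (w c).support, mdeg m + deg c = E

theorem gcomp_isHom {B : Type*} (deg : B → ℕ) (E : ℕ) (w : B →₀ MvPolynomial σ K) :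
    IsHom deg E (gcomp deg E w) := by
  intro c m hm
  rw [mem_support_iff, coeff_gcomp] at hm
  by_contra h
  rw [if_neg h] at hm
  exact hm rfl

theorem IsHom.gcomp_eq {B : Type*} {deg : B → ℕ} {E : ℕ} {w : B →₀ MvPolynomial σ K}
    (h : IsHom deg E w) : gcomp deg E w = w := by
  ext c m
  rw [coeff_gcomp]
  split_ifs with h1
  · rfl
  · by_contra h2
    exact h1 (h c m (mem_support_iff.2 (Ne.symm h2)))

theorem IsHom.sub {B : Type*} {deg : B → ℕ} {E : ℕ} {w w' : B →₀ MvPolynomial σ K}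
    (h : IsHom deg E w) (h' : IsHom deg E w') : IsHom deg E (w - w') := by
  classical
  intro c m hm
  rw [Finsupp.sub_apply] at hm
  rcases Finset.mem_union.1 (support_sub _ _ _ hm) with h1 | h1
  · exact h c m h1
  · exact h' c m h1

theorem ite_sum_zero' {ι M : Type*} [AddCommMonoid M] (p : Prop) [Decidable p] (t : Finset ι)
    (f : ι → M) : (if p then ∑ x ∈ t, f x else 0) = ∑ x ∈ t, if p then f x else 0 := by
  split_ifs <;> simp

theorem linMap_apply {A B : Type*} [Fintype A]
    (T : (A →₀ MvPolynomial σ K) →ₗ[MvPolynomial σ K] (B →₀ MvPolynomial σ K))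
    (w : A →₀ MvPolynomial σ K) (c : B) : T w c = ∑ b, w b * T (Finsupp.single b 1) c := by
  have h : w = ∑ b, w b • Finsupp.single b (1 : MvPolynomial σ K) := by
    conv_lhs => rw [← Finsupp.univ_sum_single w]
    refine Finset.sum_congr rfl fun b _ => ?_
    rw [Finsupp.smul_single, smul_eq_mul, mul_one]
  conv_lhs => rw [h]
  rw [map_sum, Finsupp.finsetSum_apply]
  refine Finset.sum_congr rfl fun b _ => ?_
  rw [map_smul, Finsupp.smul_apply, smul_eq_mul]

theorem gcomp_comm {A B : Type*} [Finite A] {dA : A → ℕ} {dB : B → ℕ}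
    {T : (A →₀ MvPolynomial σ K) →ₗ[MvPolynomial σ K] (B →₀ MvPolynomial σ K)}
    (hT : ∀ b, IsHom dB (dA b) (T (Finsupp.single b 1))) (E : ℕ) (w : A →₀ MvPolynomial σ K) :
    T (gcomp dA E w) = gcomp dB E (T w) := by
  classical
  have := Fintype.ofFinite A
  ext c m
  rw [coeff_gcomp, linMap_apply, linMap_apply T w, coeff_sum, coeff_sum, ite_sum_zero']
  refine Finset.sum_congr rfl fun b _ => ?_
  rw [coeff_mul, coeff_mul, ite_sum_zero']
  refine Finset.sum_congr rfl fun x hx => ?_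
  rw [coeff_gcomp]
  by_cases h0 : coeff x.2 (T (Finsupp.single b 1) c) = 0
  · simp [h0]
  · have h1 := hT b c x.2 (mem_support_iff.2 h0)
    have h2 : mdeg x.1 + mdeg x.2 = mdeg m := by
      rw [← mdeg_add, Finset.HasAntidiagonal.mem_antidiagonal.1 hx]
    have h3 : mdeg x.1 + dA b = E ↔ mdeg m + dB c = E := by omega
    by_cases h4 : mdeg m + dB c = E
    · rw [if_pos h4, if_pos (h3.2 h4)]
    · rw [if_neg h4, if_neg (fun h => h4 (h3.1 h)), zero_mul]

theorem sum_gcomp {B : Type*} [Finite B] (deg : B → ℕ) (w : B →₀ MvPolynomial σ K) :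
    ∃ N : ℕ, w = ∑ E ∈ Finset.range N, gcomp deg E w := by
  classical
  have := Fintype.ofFinite B
  refine ⟨(∑ b, ∑ m ∈ (w b).support, (mdeg m + deg b)) + 1, ?_⟩
  ext c m
  rw [Finsupp.finsetSum_apply, coeff_sum]
  simp only [coeff_gcomp]
  rw [Finset.sum_ite_eq]
  split_ifs with h
  · rfl
  · by_contra h1
    apply h
    rw [Finset.mem_range, Nat.lt_succ_iff]
    have h2 := Finset.single_le_sum (f := fun m => mdeg m + deg c) (fun _ _ => Nat.zero_le _)
      (mem_support_iff.2 h1)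
    have h3 := Finset.single_le_sum (f := fun b => ∑ m ∈ (w b).support, (mdeg m + deg b))
      (fun _ _ => Nat.zero_le _) (Finset.mem_univ c)
    exact h2.trans h3

end Grading

section Existence

/-- A stage in the construction of a resolution. -/
structure ResStage (K : Type*) [Field K] (σ : Type*) where
  n : ℕ
  deg : Fin n → ℕ
  N : Submodule (MvPolynomial σ K) (Fin n →₀ MvPolynomial σ K)
  hom : ∀ E w, w ∈ N → gcomp deg E w ∈ N
  min : ∀ w ∈ N, ∀ c, coeff 0 (w c) = 0

variable {K : Type*} [Field K] {σ : Type*}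

theorem exists_hom_gens [Finite σ] (s : ResStage K σ) :
    ∃ (n : ℕ) (v : Fin n → (Fin s.n →₀ MvPolynomial σ K)),
      (∀ j, ∃ E, IsHom s.deg E (v j)) ∧
        Submodule.span (MvPolynomial σ K) (Set.range v) = s.N := by
  set X := {w | w ∈ s.N ∧ ∃ E, IsHom s.deg E w} with hX
  have hspan : Submodule.span (MvPolynomial σ K) X = s.N := by
    apply le_antisymm
    · rw [Submodule.span_le]; exact fun w hw => hw.1
    · intro w hw
      obtain ⟨N, hN⟩ := sum_gcomp s.deg w
      rw [hN]
      exact Submodule.sum_mem _ fun E _ =>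
        Submodule.subset_span ⟨s.hom E w hw, E, gcomp_isHom _ _ _⟩
  have hfg : (Submodule.span (MvPolynomial σ K) X).FG := IsNoetherian.noetherian _
  rw [Submodule.fg_span_iff_fg_span_finset_subset] at hfg
  obtain ⟨t, htX, ht⟩ := hfg
  refine ⟨t.card, fun j => (t.equivFin.symm j : Fin s.n →₀ MvPolynomial σ K), ?_, ?_⟩
  · intro j
    exact (htX (t.equivFin.symm j).2).2
  · rw [← hspan, ht]
    congr 1
    ext w
    constructor
    · rintro ⟨j, rfl⟩
      exact (t.equivFin.symm j).2
    · intro hw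
      exact ⟨t.equivFin ⟨w, hw⟩, by simp⟩

theorem res_step [Finite σ] (s : ResStage K σ) :
    ∃ (s' : ResStage K σ) (d : (Fin s'.n →₀ MvPolynomial σ K) →ₗ[MvPolynomial σ K]
      (Fin s.n →₀ MvPolynomial σ K)),
      LinearMap.range d = s.N ∧ s'.N = LinearMap.ker d ∧
      ∀ b, IsHom s.deg (s'.deg b) (d (Finsupp.single b 1)) := by
  classical
  have hex := exists_hom_gens s
  obtain ⟨n, ⟨v, hv, hspan⟩, hmin⟩ : ∃ n, (∃ v : Fin n → (Fin s.n →₀ MvPolynomial σ K),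
      (∀ j, ∃ E, IsHom s.deg E (v j)) ∧
        Submodule.span (MvPolynomial σ K) (Set.range v) = s.N) ∧ ∀ m < n,
      ¬ ∃ v : Fin m → (Fin s.n →₀ MvPolynomial σ K), (∀ j, ∃ E, IsHom s.deg E (v j)) ∧
        Submodule.span (MvPolynomial σ K) (Set.range v) = s.N :=
    ⟨Nat.find hex, Nat.find_spec hex, fun m hm => Nat.find_min hex hm⟩
  choose deg' hdeg' using hv
  set d := Finsupp.linearCombination (MvPolynomial σ K) v with hd
  have hd1 : ∀ b, d (Finsupp.single b 1) = v b := by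
    intro b; simp [hd]
  have hhom : ∀ b, IsHom s.deg (deg' b) (d (Finsupp.single b 1)) := by
    intro b; rw [hd1]; exact hdeg' b
  have hker : ∀ E w, w ∈ LinearMap.ker d → gcomp deg' E w ∈ LinearMap.ker d := by
    intro E w hw
    rw [LinearMap.mem_ker] at hw ⊢
    rw [gcomp_comm hhom, hw]
    ext c m
    rw [coeff_gcomp]
    simp
  refine ⟨⟨n, deg', LinearMap.ker d, hker, ?_⟩, d, ?_, rfl, hhom⟩
  · intro w hw c
    by_contra hne
    have h1 := hker (deg' c) w hw
    set r := gcomp deg' (deg' c) w with hr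
    have h2 : r c = C (coeff 0 (w c)) := by
      ext m
      rw [hr, coeff_gcomp, coeff_C]
      by_cases hm : m = 0
      · subst hm; simp [mdeg]
      · rw [if_neg (Ne.symm hm), if_neg]
        intro h
        exact hm (mdeg_eq_zero (by omega))
    rw [LinearMap.mem_ker, hd, Finsupp.linearCombination_apply, Finsupp.sum_fintype _ _ (by simp),
      Finset.sum_eq_add_sum_sdiff_singleton_of_mem (Finset.mem_univ c), h2] at h1
    -- `v c` is a combination of the other generators
    set W := Submodule.span (MvPolynomial σ K) (Set.image v {c}ᶜ) with hW
    have h3 : v c ∈ W := by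
      have h4 : (C (coeff 0 (w c)) : MvPolynomial σ K) • v c ∈ W := by
        rw [eq_neg_of_add_eq_zero_left h1]
        refine neg_mem (Submodule.sum_mem _ fun j hj => Submodule.smul_mem _ _
          (Submodule.subset_span ⟨j, ?_, rfl⟩))
        simpa using hj
      have h5 := W.smul_mem (C (coeff 0 (w c))⁻¹) h4
      rwa [smul_smul, ← C_mul, inv_mul_cancel₀ hne, C_1, one_smul] at h5
    have h6 : W = s.N := by
      rw [← hspan]
      apply le_antisymm
      · exact Submodule.span_mono (Set.image_subset_range _ _)
      · rw [Submodule.span_le]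
        rintro _ ⟨j, rfl⟩
        by_cases hj : j = c
        · rw [hj]; exact h3
        · exact Submodule.subset_span ⟨j, hj, rfl⟩
    have hn : 0 < n := Fin.pos c
    have hcard : Fintype.card {j : Fin n // j ≠ c} = n - 1 := by
      simp [Fintype.card_subtype_compl]
    have eqv : {j : Fin n // j ≠ c} ≃ Fin (n - 1) := Fintype.equivFinOfCardEq hcard
    refine hmin (n - 1) (by omega) ⟨fun j => v (eqv.symm j), fun j => ⟨_, hdeg' _⟩, ?_⟩
    rw [← h6, hW]
    congr 1
    ext w
    constructor
    · rintro ⟨j, rfl⟩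
      exact ⟨_, (eqv.symm j).2, rfl⟩
    · rintro ⟨j, hj, rfl⟩
      exact ⟨eqv ⟨j, hj⟩, by simp⟩
  · exact (Finsupp.range_linearCombination _).trans hspan

theorem exists_res [Finite σ] (I : Ideal (MvPolynomial σ K))
    (hI : ∀ E : ℕ, ∀ p ∈ I, homogeneousComponent E p ∈ I) (hI0 : ∀ p ∈ I, coeff 0 p = 0) :
    Nonempty (MinGradedFreeRes K σ I) := by
  set ε : (Fin 1 →₀ MvPolynomial σ K) →ₗ[MvPolynomial σ K] MvPolynomial σ K :=
    Finsupp.lapply 0 with hε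
  let s0 : ResStage K σ :=
    { n := 1
      deg := fun _ => 0
      N := Submodule.comap ε I
      hom := by
        intro E w hw
        rw [Submodule.mem_comap] at hw ⊢
        have : ε (gcomp (fun _ => 0) E w) = homogeneousComponent E (ε w) := by
          ext m
          simp only [hε, Finsupp.lapply_apply]
          rw [coeff_gcomp, coeff_homogeneousComponent]
          simp [mdeg_eq_degree]
        rw [this]
        exact hI E _ hw
      min := by
        intro w hw c
        have hc : c = 0 := Subsingleton.elim _ _
        subst hc
        exact hI0 _ hw }
  choose next d hrange hker hhom using res_step (K := K) (σ := σ)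
  let st : ℕ → ResStage K σ := fun i => Nat.rec s0 (fun _ s => next s) i
  refine ⟨{ B := fun i => Fin (st i).n
            finB := fun i => inferInstance
            deg := fun i => (st i).deg
            d := fun i => d (st i)
            ε := ε
            ε_homog := ?_
            surj := ?_
            exact0 := hrange s0
            exact := fun i => (hrange (st (i + 1))).trans (hker (st i))
            homog := fun i b c => hhom (st i) b c
            minimal := ?_ }⟩
  · intro b
    have hc : b = (0 : Fin 1) := Subsingleton.elim (α := Fin 1) _ _
    subst hc
    have : ε (Finsupp.single 0 1) = 1 := by simp [hε]
    erw [this]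
    exact isHomogeneous_one _ _
  · intro s
    exact ⟨Finsupp.single 0 s, by simp [hε]⟩
  · intro i b c
    refine (st i).min _ ?_ c
    rw [← hrange]
    exact LinearMap.mem_range_self _ _

end Existence
section Homotopy

variable {K : Type*} [Field K] {σ : Type*} {I : Ideal (MvPolynomial σ K)}

theorem exists_lift (F : MinGradedFreeRes K σ I) (i : ℕ)
    (T : (F.B i →₀ MvPolynomial σ K) →ₗ[MvPolynomial σ K] (F.B i →₀ MvPolynomial σ K))
    (h1 : ∀ b, IsHom (F.deg i) (F.deg i b + 2) (T (Finsupp.single b 1)))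
    (h2 : ∀ b, T (Finsupp.single b 1) ∈ LinearMap.range (F.d i)) :
    ∃ h : (F.B i →₀ MvPolynomial σ K) →ₗ[MvPolynomial σ K] (F.B (i + 1) →₀ MvPolynomial σ K),
      (∀ b, IsHom (F.deg (i + 1)) (F.deg i b + 2) (h (Finsupp.single b 1))) ∧
      F.d i ∘ₗ h = T := by
  have := F.finB (i + 1)
  choose y hy using h2
  refine ⟨Finsupp.linearCombination _ fun b => gcomp (F.deg (i + 1)) (F.deg i b + 2) (y b),
    ?_, ?_⟩
  · intro b
    simp only [Finsupp.linearCombination_single, one_smul]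
    exact gcomp_isHom _ _ _
  · refine Finsupp.lhom_ext' fun b => LinearMap.ext_ring ?_
    simp only [LinearMap.comp_apply, Finsupp.lsingle_apply, Finsupp.linearCombination_single,
      one_smul]
    rw [gcomp_comm (F.homog i), hy, (h1 b).gcomp_eq]

theorem isHom_smul_single {B : Type*} (deg : B → ℕ) {f : MvPolynomial σ K}
    (hf2 : ∀ m ∈ f.support, mdeg m = 2) (b : B) :
    IsHom deg (deg b + 2) (f • Finsupp.single b (1 : MvPolynomial σ K)) := by
  classical
  intro c m hm
  rw [Finsupp.smul_single, smul_eq_mul, mul_one, Finsupp.single_apply] at hm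
  split_ifs at hm with h
  · subst h; rw [hf2 m hm, add_comm]
  · simp at hm

theorem dep_choice {S : ℕ → Type*} (s0 : S 0) (R : ∀ i, S i → S (i + 1) → Prop)
    (step : ∀ i s, ∃ s', R i s s') :
    ∃ h : ∀ i, S i, h 0 = s0 ∧ ∀ i, R i (h i) (h (i + 1)) := by
  choose nxt hnxt using step
  exact ⟨fun i => Nat.rec s0 (fun i s => nxt i s) i, rfl, fun i => hnxt i _⟩

/-- Good partial homotopies. -/
def HGood (F : MinGradedFreeRes K σ I) (f : MvPolynomial σ K) (i : ℕ)
    (h : (F.B i →₀ MvPolynomial σ K) →ₗ[MvPolynomial σ K] (F.B (i + 1) →₀ MvPolynomial σ K)) :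
    Prop :=
  (∀ b, IsHom (F.deg (i + 1)) (F.deg i b + 2) (h (Finsupp.single b 1))) ∧
      ∀ x, F.d i (h (F.d i x)) = f • F.d i x

theorem homotopy_zero (F : MinGradedFreeRes K σ I) {f : MvPolynomial σ K} (hf : f ∈ I)
    (hf2 : ∀ m ∈ f.support, mdeg m = 2) :
    ∃ h, HGood F f 0 h ∧ F.d 0 ∘ₗ h = f • LinearMap.id := by
  have c1 : ∀ b, IsHom (F.deg 0) (F.deg 0 b + 2)
      ((f • LinearMap.id :
        (F.B 0 →₀ MvPolynomial σ K) →ₗ[MvPolynomial σ K] (F.B 0 →₀ MvPolynomial σ K))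
        (Finsupp.single b 1)) := fun b => by
    rw [LinearMap.smul_apply, LinearMap.id_apply]
    exact isHom_smul_single (F.deg 0) hf2 b
  have c2 : ∀ b, (f • LinearMap.id :
      (F.B 0 →₀ MvPolynomial σ K) →ₗ[MvPolynomial σ K] (F.B 0 →₀ MvPolynomial σ K))
      (Finsupp.single b 1) ∈ LinearMap.range (F.d 0) := by
    intro b
    have e : F.ε (f • (Finsupp.single b 1)) ∈ I := by
      rw [map_smul, smul_eq_mul]
      exact Ideal.mul_mem_right _ _ hf
    rw [F.exact0, LinearMap.smul_apply, LinearMap.id_apply]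
    exact e
  obtain ⟨h0, h0a, h0b⟩ := exists_lift F 0 (f • LinearMap.id) c1 c2
  refine ⟨h0, ⟨h0a, fun x => ?_⟩, h0b⟩
  have e2 := LinearMap.congr_fun h0b (F.d 0 x)
  rw [LinearMap.comp_apply, LinearMap.smul_apply, LinearMap.id_apply] at e2
  exact e2

theorem homotopy_step (F : MinGradedFreeRes K σ I) {f : MvPolynomial σ K}
    (hf2 : ∀ m ∈ f.support, mdeg m = 2) (i : ℕ)
    (h : (F.B i →₀ MvPolynomial σ K) →ₗ[MvPolynomial σ K] (F.B (i + 1) →₀ MvPolynomial σ K))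
    (hh : HGood F f i h) :
    ∃ h', HGood F f (i + 1) h' ∧ F.d (i + 1) ∘ₗ h' + h ∘ₗ F.d i = f • LinearMap.id := by
  obtain ⟨ha, hb⟩ := hh
  have := F.finB i
  have c1 : ∀ b, IsHom (F.deg (i + 1)) (F.deg (i + 1) b + 2)
      ((f • LinearMap.id - h ∘ₗ F.d i : _ →ₗ[MvPolynomial σ K] _) (Finsupp.single b 1)) := by
    intro b
    rw [LinearMap.sub_apply]
    refine IsHom.sub (isHom_smul_single _ hf2 b) ?_
    rw [LinearMap.comp_apply]
    have e1 : IsHom (fun c => F.deg i c + 2) (F.deg (i + 1) b + 2)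
        (F.d i (Finsupp.single b 1)) := by
      intro c m hm
      have := F.homog i b c m hm
      simp only
      omega
    rw [← e1.gcomp_eq, gcomp_comm (fun b c => ha b c)]
    exact gcomp_isHom _ _ _
  have c2 : ∀ b, (f • LinearMap.id - h ∘ₗ F.d i : _ →ₗ[MvPolynomial σ K] _)
      (Finsupp.single b 1) ∈ LinearMap.range (F.d (i + 1)) := by
    intro b
    rw [F.exact i, LinearMap.mem_ker, LinearMap.sub_apply, map_sub, LinearMap.comp_apply, hb,
      LinearMap.smul_apply, map_smul, LinearMap.id_apply, sub_self]
  obtain ⟨h', h'a, h'b⟩ := exists_lift F (i + 1) (f • LinearMap.id - h ∘ₗ F.d i) c1 c2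
  refine ⟨h', ⟨h'a, ?_⟩, ?_⟩
  · intro x
    have e2 := LinearMap.congr_fun h'b (F.d (i + 1) x)
    rw [LinearMap.comp_apply] at e2
    rw [e2, LinearMap.sub_apply, LinearMap.comp_apply]
    have e3 : F.d i (F.d (i + 1) x) = 0 := by
      rw [← LinearMap.mem_ker, ← F.exact i]; exact LinearMap.mem_range_self _ _
    rw [e3, map_zero, sub_zero]
    rfl
  · refine LinearMap.ext fun x => ?_
    have e2 := LinearMap.congr_fun h'b x
    rw [LinearMap.sub_apply] at e2
    rw [LinearMap.add_apply, e2]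
    exact sub_add_cancel ((f • LinearMap.id : (F.B (i + 1) →₀ MvPolynomial σ K)
      →ₗ[MvPolynomial σ K] (F.B (i + 1) →₀ MvPolynomial σ K)) x) _

theorem exists_homotopy (F : MinGradedFreeRes K σ I) {f : MvPolynomial σ K} (hf : f ∈ I)
    (hf2 : ∀ m ∈ f.support, mdeg m = 2) :
    ∃ h : ∀ i, (F.B i →₀ MvPolynomial σ K) →ₗ[MvPolynomial σ K]
        (F.B (i + 1) →₀ MvPolynomial σ K),
      (∀ i b, IsHom (F.deg (i + 1)) (F.deg i b + 2) (h i (Finsupp.single b 1))) ∧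
      F.d 0 ∘ₗ h 0 = f • LinearMap.id ∧
      ∀ i, F.d (i + 1) ∘ₗ h (i + 1) + h i ∘ₗ F.d i = f • LinearMap.id := by
  obtain ⟨h0, h0a, h0b⟩ := homotopy_zero F hf hf2
  obtain ⟨h, hh0, hh⟩ := dep_choice (S := fun i => {h // HGood F f i h}) ⟨h0, h0a⟩
    (fun i h h' => F.d (i + 1) ∘ₗ h'.1 + h.1 ∘ₗ F.d i = f • LinearMap.id)
    (fun i s => by
      obtain ⟨h', h1, h2⟩ := homotopy_step F hf2 i s.1 s.2
      exact ⟨⟨h', h1⟩, h2⟩)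
  refine ⟨fun i => (h i).1, fun i => (h i).2.1, ?_, hh⟩
  have e : (h 0).1 = h0 := by rw [hh0]
  change F.d 0 ∘ₗ (h 0).1 = _
  rw [e]
  exact h0b

/-- The matrix of a linear map, with a ring homomorphism applied to the entries. -/
noncomputable def bcMat {R : Type*} [CommRing R] (f : MvPolynomial σ K →+* R) {A B : Type*}
    (T : (A →₀ MvPolynomial σ K) →ₗ[MvPolynomial σ K] (B →₀ MvPolynomial σ K)) : Matrix A B R :=
  fun a b => f (T (Finsupp.single a 1) b)

theorem bcMat_comp {R : Type*} [CommRing R] (f : MvPolynomial σ K →+* R) {A B C : Type*}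
    [Fintype B]
    (T : (A →₀ MvPolynomial σ K) →ₗ[MvPolynomial σ K] (B →₀ MvPolynomial σ K))
    (U : (B →₀ MvPolynomial σ K) →ₗ[MvPolynomial σ K] (C →₀ MvPolynomial σ K)) :
    bcMat f T * bcMat f U = bcMat f (U ∘ₗ T) := by
  ext a c
  simp only [Matrix.mul_apply, bcMat, LinearMap.comp_apply]
  rw [linMap_apply U, map_sum]
  simp only [map_mul]

theorem bcMat_add {R : Type*} [CommRing R] (f : MvPolynomial σ K →+* R) {A B : Type*}
    (T U : (A →₀ MvPolynomial σ K) →ₗ[MvPolynomial σ K] (B →₀ MvPolynomial σ K)) :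
    bcMat f (T + U) = bcMat f T + bcMat f U := by
  ext a c
  simp [bcMat]

theorem bcMat_smul_id {R : Type*} [CommRing R] (f : MvPolynomial σ K →+* R) {A : Type*}
    [DecidableEq A] (g : MvPolynomial σ K) :
    bcMat f (g • LinearMap.id : (A →₀ MvPolynomial σ K) →ₗ[MvPolynomial σ K] _) =
      f g • (1 : Matrix A A R) := by
  ext a c
  by_cases h : a = c
  · subst h; simp [bcMat]
  · simp [bcMat, h]

variable {k : Type*} [Field k] {P : Type*}

theorem map_pow_vars (f : MvPolynomial σ K →+* MvPolynomial P k)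
    (hf : ∀ x, f (X x) ∈ idealOfVars P k) {n : ℕ} {g : MvPolynomial σ K}
    (hg : g ∈ idealOfVars σ K ^ n) : f g ∈ idealOfVars P k ^ n := by
  have h1 : Ideal.map f (idealOfVars σ K) ≤ idealOfVars P k := by
    rw [idealOfVars, Ideal.map_span, Ideal.span_le]
    rintro _ ⟨_, ⟨x, rfl⟩, rfl⟩
    exact hf x
  have h2 := Ideal.mem_map_of_mem f hg
  rw [Ideal.map_pow] at h2
  exact Ideal.pow_right_mono h1 n h2

theorem hty_of_mem (F : MinGradedFreeRes K σ I) [∀ i, Fintype (F.B i)] [∀ i, DecidableEq (F.B i)]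
    (f : MvPolynomial σ K →+* MvPolynomial P k)
    (hf : ∀ x, f (X x) ∈ idealOfVars P k) {g : MvPolynomial σ K} (hg : g ∈ I)
    (hg2 : ∀ m ∈ g.support, mdeg m = 2) :
    Hty (fun i => bcMat f (F.d i)) F.deg 2 (f g) := by
  obtain ⟨h, h1, h2, h3⟩ := exists_homotopy F hg hg2
  refine ⟨fun i => bcMat f (h i), ?_, ?_, ?_⟩
  · rw [bcMat_comp, h2, bcMat_smul_id]
  · intro i
    rw [bcMat_comp, bcMat_comp, ← bcMat_add, h3, bcMat_smul_id]
  · intro i b b'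
    apply map_pow_vars f hf
    rw [mem_pow_idealOfVars_iff]
    intro m hm
    have := h1 i b b' m hm
    rw [mdeg_eq_degree] at this
    omega

variable {B : ℕ → Type} [∀ i, Fintype (B i)] [∀ i, DecidableEq (B i)]

/-- The additive group of elements acting null-homotopically. -/
def htyGroup (D : ∀ i, Matrix (B (i + 1)) (B i) (MvPolynomial P k)) (deg : ∀ i, B i → ℕ)
    (e : ℕ) : AddSubgroup (MvPolynomial P k) where
  carrier := {g | Hty D deg e g}
  zero_mem' := ⟨fun _ => 0, by simp, by simp, by simp⟩
  add_mem' := by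
    rintro g g' ⟨H, h1, h2, h3⟩ ⟨H', h1', h2', h3'⟩
    refine ⟨fun i => H i + H' i, ?_, ?_, ?_⟩
    · rw [Matrix.add_mul, h1, h1', add_smul]
    · intro i
      rw [Matrix.add_mul, Matrix.mul_add, add_smul, ← h2 i, ← h2' i]
      abel
    · intro i b b'
      exact add_mem (h3 i b b') (h3' i b b')
  neg_mem' := by
    rintro g ⟨H, h1, h2, h3⟩
    refine ⟨fun i => - H i, ?_, ?_, ?_⟩
    · rw [Matrix.neg_mul, h1, neg_smul]
    · intro i
      rw [Matrix.neg_mul, Matrix.mul_neg, neg_smul, ← h2 i]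
      abel
    · intro i b b'
      exact neg_mem (h3 i b b')

theorem htyGroup_mul (D : ∀ i, Matrix (B (i + 1)) (B i) (MvPolynomial P k))
    (deg : ∀ i, B i → ℕ) (a e : ℕ) (r g : MvPolynomial P k) (hr : r ∈ idealOfVars P k ^ a)
    (hg : g ∈ htyGroup D deg e) : r * g ∈ htyGroup D deg (a + e) := by
  obtain ⟨H, h1, h2, h3⟩ := hg
  refine ⟨fun i => r • H i, ?_, ?_, ?_⟩
  · rw [Matrix.smul_mul, h1, smul_smul]
  · intro i
    rw [Matrix.smul_mul, Matrix.mul_smul, ← smul_add, h2, smul_smul]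
  · intro i b b'
    have := Ideal.mul_mem_mul hr (h3 i b b')
    rw [← pow_add] at this
    refine Ideal.pow_le_pow_right ?_ this
    omega

theorem reg_core [Fintype P] (F : MinGradedFreeRes K σ I)
    (f : MvPolynomial σ K →+* MvPolynomial P k)
    (hf : ∀ x, f (X x) ∈ idealOfVars P k)
    (th : k) (hth : th ≠ 0) (hth' : 1 - th * (Fintype.card P : k) ^ 2 ≠ 0)
    (h3 : ∀ i j : P, ∃ l : P, l ≠ i ∧ l ≠ j)
    (hq : ∀ i j : P, i ≠ j → ∃ g ∈ I, (∀ m ∈ g.support, mdeg m = 2) ∧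
      f g = (X i * X j - C th * (∑ l : P, X l) ^ 2 : MvPolynomial P k))
    (u : MvPolynomial P k) (hu : u ∈ idealOfVars P k ^ 3) (huJ : u ∉ Ideal.map f I) :
    ∃ i, ∃ b : F.B i, i + 3 ≤ F.deg i b := by
  classical
  have hfin := F.finB
  have : ∀ i, Fintype (F.B i) := fun i => Fintype.ofFinite _
  by_contra hcon
  push Not at hcon
  apply huJ
  set D : ∀ i, Matrix (F.B (i + 1)) (F.B i) (MvPolynomial P k) := fun i => bcMat f (F.d i) with hDdef
  have hD : ∀ i, D (i + 1) * D i = 0 := by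
    intro i
    have e1 : F.d i ∘ₗ F.d (i + 1) = 0 := by
      refine LinearMap.ext fun x => ?_
      rw [LinearMap.comp_apply, LinearMap.zero_apply, ← LinearMap.mem_ker, ← F.exact i]; exact LinearMap.mem_range_self _ _
    simp only [hDdef]
    rw [bcMat_comp, e1]
    ext a b
    simp [bcMat]
  have hH : ∀ p, Hty D F.deg 4 (X p ^ 4) := by
    intro p
    refine four_mem (htyGroup D F.deg) (htyGroup_mul D F.deg) th hth hth' h3 ?_ p
    intro i j hij
    obtain ⟨g, hgI, hg2, hg⟩ := hq i j hij
    rw [← hg]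
    exact hty_of_mem F f hf hgI hg2
  obtain ⟨t, ht⟩ := F.surj 1
  obtain ⟨y, hy⟩ := core_lemma hD hH u hu (fun b => hcon _ b) (fun b => f (t b))
  have heps : ∀ w : F.B 0 →₀ MvPolynomial σ K, F.ε w = ∑ b, w b * F.ε (Finsupp.single b 1) := by
    intro w
    conv_lhs => rw [← Finsupp.univ_sum_single w]
    rw [map_sum]
    refine Finset.sum_congr rfl fun b _ => ?_
    rw [← smul_eq_mul (w b), ← map_smul, Finsupp.smul_single, smul_eq_mul, mul_one]
  have e1 : ∑ b, (u • fun b => f (t b)) b * f (F.ε (Finsupp.single b 1)) = u * f (F.ε t) := by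
    rw [heps t, map_sum, Finset.mul_sum]
    refine Finset.sum_congr rfl fun b _ => ?_
    simp only [Pi.smul_apply, smul_eq_mul, map_mul, mul_assoc]
  have e2 : ∑ b, Matrix.vecMul y (D 0) b * f (F.ε (Finsupp.single b 1)) =
      ∑ c, y c * f (F.ε (F.d 0 (Finsupp.single c 1))) := by
    simp only [Matrix.vecMul, dotProduct, Finset.sum_mul]
    rw [Finset.sum_comm]
    refine Finset.sum_congr rfl fun c _ => ?_
    rw [heps (F.d 0 _), map_sum, Finset.mul_sum]
    refine Finset.sum_congr rfl fun b _ => ?_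
    simp only [hDdef, bcMat, map_mul, mul_assoc]
  have e3 : u * f (F.ε t) ∈ Ideal.map f I := by
    rw [← e1, hy, e2]
    refine Ideal.sum_mem _ fun c _ => Ideal.mul_mem_left _ _ (Ideal.mem_map_of_mem f ?_)
    have : F.d 0 (Finsupp.single c 1) ∈ Submodule.comap F.ε (I : Submodule _ _) := by
      rw [← F.exact0]; exact LinearMap.mem_range_self _ _
    exact this
  have e4 := Ideal.mul_mem_left _ u (Ideal.mem_map_of_mem f ht)
  have := sub_mem e3 e4
  rw [map_sub, map_one] at this
  convert this using 1
  ring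

end Homotopy

section Main

theorem jm_gen_homog (K : Type*) [Field K] {L : Type*} [Lattice L] (a b : L) :
    (X a * X b - X (a ⊓ b) * X (a ⊔ b) : MvPolynomial L K).IsHomogeneous 2 :=
  ((isHomogeneous_X K a).mul (isHomogeneous_X K b)).sub
    ((isHomogeneous_X K (a ⊓ b)).mul (isHomogeneous_X K (a ⊔ b)))

theorem jm_homog (K : Type*) [Field K] (L : Type*) [Lattice L] (E : ℕ) (p : MvPolynomial L K)
    (hp : p ∈ joinMeetIdeal K L) : homogeneousComponent E p ∈ joinMeetIdeal K L := by
  let _ := MvPolynomial.gradedAlgebra (σ := L) (R := K)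
  have h : (joinMeetIdeal K L).IsHomogeneous (homogeneousSubmodule L K) := by
    apply Ideal.homogeneous_span
    rintro _ ⟨a, b, -, -, rfl⟩
    exact ⟨2, jm_gen_homog K a b⟩
  have := h E hp
  rwa [← MvPolynomial.decomposition.decompose'_apply]

theorem jm_const (K : Type*) [Field K] (L : Type*) [Lattice L] (p : MvPolynomial L K)
    (hp : p ∈ joinMeetIdeal K L) : coeff 0 p = 0 := by
  have : joinMeetIdeal K L ≤ RingHom.ker (constantCoeff : MvPolynomial L K →+* K) := by
    unfold joinMeetIdeal
    rw [Ideal.span_le]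
    rintro _ ⟨a, b, -, -, rfl⟩
    simp [RingHom.mem_ker]
  exact this hp

end Main

section Final

open Classical in
/-- The specialisation homomorphism attached to an interval `[u, v]`. -/
noncomputable def specHom (K : Type*) [Field K] {L : Type*} [Lattice L] [Fintype L] {k : Type*}
    [Field k] [Algebra K k] (u v : L) (th : k) :
    MvPolynomial L K →+* MvPolynomial {x : L // u < x ∧ x < v} k :=
  eval₂Hom ((C : k →+* MvPolynomial {x : L // u < x ∧ x < v} k).comp (algebraMap K k))
    (fun x => if x = u then C th * ∑ l : {x : L // u < x ∧ x < v}, X l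
      else if x = v then ∑ l : {x : L // u < x ∧ x < v}, X l
      else if h : u < x ∧ x < v then X ⟨x, h⟩ else 0)

open Classical in
theorem specHom_main (K : Type*) [Field K] {L : Type*} [Lattice L] [Fintype L] {k : Type*}
    [Field k] [Algebra K k] (u v : L) (huv : u < v) (th : k)
    (hcov : ∀ x y, u < x → x < v → u < y → y < v → x ≠ y → x ⊓ y = u ∧ x ⊔ y = v) :
    (∀ x, specHom K u v th (X x) ∈ idealOfVars {x : L // u < x ∧ x < v} k) ∧
    (∀ i j : {x : L // u < x ∧ x < v}, i ≠ j →
      specHom K u v th (X i.1 * X j.1 - X (i.1 ⊓ j.1) * X (i.1 ⊔ j.1)) =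
        X i * X j - C th * (∑ l : {x : L // u < x ∧ x < v}, X l) ^ 2) ∧
    (∀ a b : L, ¬ a ≤ b → ¬ b ≤ a →
      specHom K u v th (X a * X b - X (a ⊓ b) * X (a ⊔ b)) = 0 ∨
      ∃ i j : {x : L // u < x ∧ x < v}, i ≠ j ∧ i.1 = a ∧ j.1 = b) := by
  have hX : ∀ x, specHom K u v th (X x) =
      if x = u then C th * ∑ l : {x : L // u < x ∧ x < v}, X l
      else if x = v then ∑ l : {x : L // u < x ∧ x < v}, X l
      else if h : u < x ∧ x < v then X ⟨x, h⟩ else 0 := fun x => by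
    simp [specHom]
  have hXu : specHom K u v th (X u) = C th * ∑ l : {x : L // u < x ∧ x < v}, X l := by
    rw [hX, if_pos rfl]
  have hXv : specHom K u v th (X v) = ∑ l : {x : L // u < x ∧ x < v}, X l := by
    rw [hX, if_neg huv.ne', if_pos rfl]
  have hXi : ∀ i : {x : L // u < x ∧ x < v}, specHom K u v th (X i.1) = X i := fun i => by
    rw [hX, if_neg i.2.1.ne', if_neg i.2.2.ne, dif_pos i.2]
  have hXo : ∀ x, ¬ (u ≤ x ∧ x ≤ v) → specHom K u v th (X x) = 0 := fun x hx => by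
    have h1 : x ≠ u := by rintro rfl; exact hx ⟨le_rfl, huv.le⟩
    have h2 : x ≠ v := by rintro rfl; exact hx ⟨huv.le, le_rfl⟩
    have h3 : ¬ (u < x ∧ x < v) := fun h => hx ⟨h.1.le, h.2.le⟩
    rw [hX, if_neg h1, if_neg h2, dif_neg h3]
  have hmem : ∀ i : {x : L // u < x ∧ x < v},
      (X i : MvPolynomial {x : L // u < x ∧ x < v} k) ∈ idealOfVars _ k :=
    fun i => Ideal.subset_span ⟨i, rfl⟩
  have hs : (∑ l : {x : L // u < x ∧ x < v}, X l :
      MvPolynomial {x : L // u < x ∧ x < v} k) ∈ idealOfVars _ k :=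
    Ideal.sum_mem _ fun i _ => hmem i
  refine ⟨?_, ?_, ?_⟩
  · intro x
    rw [hX]
    split_ifs
    · exact Ideal.mul_mem_left _ _ hs
    · exact hs
    · exact hmem _
    · exact zero_mem _
  · intro i j hij
    obtain ⟨h1, h2⟩ := hcov i.1 j.1 i.2.1 i.2.2 j.2.1 j.2.2 (fun h => hij (Subtype.ext h))
    rw [h1, h2, map_sub, map_mul, map_mul, hXi, hXi, hXu, hXv]
    ring
  · intro a b hab hba
    by_cases ha : u ≤ a ∧ a ≤ v
    · by_cases hb : u ≤ b ∧ b ≤ v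
      · right
        have ha1 : u < a := lt_of_le_of_ne ha.1 (by rintro rfl; exact hab hb.1)
        have ha2 : a < v := lt_of_le_of_ne ha.2 (by rintro rfl; exact hba hb.2)
        have hb1 : u < b := lt_of_le_of_ne hb.1 (by rintro rfl; exact hba ha.1)
        have hb2 : b < v := lt_of_le_of_ne hb.2 (by rintro rfl; exact hab ha.2)
        refine ⟨⟨a, ha1, ha2⟩, ⟨b, hb1, hb2⟩, ?_, rfl, rfl⟩
        intro h
        exact hab (Subtype.ext_iff.1 h).le
      · left
        have : specHom K u v th (X (a ⊓ b)) * specHom K u v th (X (a ⊔ b)) = 0 := by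
          by_cases h1 : u ≤ a ⊓ b ∧ a ⊓ b ≤ v
          · by_cases h2 : u ≤ a ⊔ b ∧ a ⊔ b ≤ v
            · exact absurd ⟨h1.1.trans inf_le_right, le_sup_right.trans h2.2⟩ hb
            · rw [hXo _ h2, mul_zero]
          · rw [hXo _ h1, zero_mul]
        rw [map_sub, map_mul, map_mul, this, hXo b hb, mul_zero, sub_zero]
    · left
      have : specHom K u v th (X (a ⊓ b)) * specHom K u v th (X (a ⊔ b)) = 0 := by
        by_cases h1 : u ≤ a ⊓ b ∧ a ⊓ b ≤ v
        · by_cases h2 : u ≤ a ⊔ b ∧ a ⊔ b ≤ v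
          · exact absurd ⟨h1.1.trans inf_le_left, le_sup_left.trans h2.2⟩ ha
          · rw [hXo _ h2, mul_zero]
        · rw [hXo _ h1, zero_mul]
      rw [map_sub, map_mul, map_mul, this, hXo a ha, zero_mul, sub_zero]

theorem exists_th (k : Type*) [Field k] [Infinite k] (n : ℕ) :
    ∃ th : k, th ≠ 0 ∧ 1 - th * (n : k) ^ 2 ≠ 0 := by
  classical
  obtain ⟨th, hth⟩ := Infinite.exists_notMem_finset ({0, ((n : k) ^ 2)⁻¹} : Finset k)
  simp only [Finset.mem_insert, Finset.mem_singleton, not_or] at hth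
  refine ⟨th, hth.1, fun h => hth.2 ?_⟩
  exact eq_inv_of_mul_eq_one_left (sub_eq_zero.1 h).symm

theorem reg_of_res (K : Type*) [Field K] (L : Type*) [Lattice L] [Fintype L] [IsModularLattice L]
    (hnd : ¬ ∀ x y z : L, x ⊓ (y ⊔ z) = (x ⊓ y) ⊔ (x ⊓ z))
    (F : MinGradedFreeRes K L (joinMeetIdeal K L)) : ∃ i, ∃ b : F.B i, i + 3 ≤ F.deg i b := by
  classical
  obtain ⟨u, v, a, b, c, hua, hav, hub, hbv, huc, hcv, hab, hac, hbc, hcov⟩ := exists_cov_diam hnd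
  obtain ⟨th, hth, hth'⟩ := exists_th (AlgebraicClosure K)
    (Fintype.card {x : L // u < x ∧ x < v})
  obtain ⟨s1, s2, s3⟩ := specHom_main K u v (hua.trans hav) th hcov
  let a' : {x : L // u < x ∧ x < v} := ⟨a, hua, hav⟩
  let b' : {x : L // u < x ∧ x < v} := ⟨b, hub, hbv⟩
  let c' : {x : L // u < x ∧ x < v} := ⟨c, huc, hcv⟩
  have hab' : a' ≠ b' := fun h => hab (Subtype.ext_iff.1 h)
  have hac' : a' ≠ c' := fun h => hac (Subtype.ext_iff.1 h)
  have hbc' : b' ≠ c' := fun h => hbc (Subtype.ext_iff.1 h)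
  refine reg_core F (specHom K u v th) s1 th hth hth' ?_ ?_ (X a' * X b' * X c') ?_ ?_
  · intro i j
    by_cases h1 : a' ≠ i ∧ a' ≠ j
    · exact ⟨_, h1⟩
    by_cases h2 : b' ≠ i ∧ b' ≠ j
    · exact ⟨_, h2⟩
    refine ⟨c', ?_, ?_⟩
    · rintro rfl
      have e1 : a' = j := by by_contra h; exact h1 ⟨hac', h⟩
      have e2 : b' = j := by by_contra h; exact h2 ⟨hbc', h⟩
      exact hab' (e1.trans e2.symm)
    · rintro rfl
      have e1 : a' = i := by by_contra h; exact h1 ⟨h, hac'⟩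
      have e2 : b' = i := by by_contra h; exact h2 ⟨h, hbc'⟩
      exact hab' (e1.trans e2.symm)
  · intro i j hij
    have hne : i.1 ≠ j.1 := fun h => hij (Subtype.ext h)
    obtain ⟨h1, h2⟩ := hcov i.1 j.1 i.2.1 i.2.2 j.2.1 j.2.2 hne
    refine ⟨X i.1 * X j.1 - X (i.1 ⊓ j.1) * X (i.1 ⊔ j.1), ?_, ?_, s2 i j hij⟩
    · refine Ideal.subset_span ⟨i.1, j.1, ?_, ?_, rfl⟩
      · intro h
        rw [inf_eq_left.2 h] at h1
        exact i.2.1.ne' h1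
      · intro h
        rw [inf_eq_right.2 h] at h1
        exact j.2.1.ne' h1
    · intro m hm
      have := jm_gen_homog K i.1 j.1 (mem_support_iff.1 hm)
      rwa [mdeg_eq_degree, Finsupp.degree_eq_weight_one]
  · have hm : ∀ i : {x : L // u < x ∧ x < v},
        (X i : MvPolynomial {x : L // u < x ∧ x < v} (AlgebraicClosure K)) ∈ idealOfVars _ _ :=
      fun i => Ideal.subset_span ⟨i, rfl⟩
    rw [pow_succ, pow_two]
    exact Ideal.mul_mem_mul (Ideal.mul_mem_mul (hm _) (hm _)) (hm _)
  · intro hmem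
    have key : ∀ x ∈ Ideal.map (specHom K u v th) (joinMeetIdeal K L),
        ∀ r, lam th (r * x) = 0 := by
      intro x hx
      rw [joinMeetIdeal, Ideal.map_span] at hx
      induction hx using Submodule.span_induction with
      | mem x hx =>
        obtain ⟨_, ⟨p, q, hpq, hqp, rfl⟩, rfl⟩ := hx
        intro r
        rcases s3 p q hpq hqp with h | ⟨i, j, hij, rfl, rfl⟩
        · rw [h, mul_zero, lam_zero]
        · rw [s2 i j hij]
          exact lam_mul th r hij
      | zero => intro r; rw [mul_zero, lam_zero]
      | add x y _ _ hx hy => intro r; rw [mul_add, lam_add, hx, hy, add_zero]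
      | smul t x _ hx => intro r; rw [smul_eq_mul, ← mul_assoc]; exact hx _
    have := key _ hmem 1
    rw [one_mul, lam_u th c' hab'] at this
    exact hth this

end Final

/-- If `L` is a finite modular non-distributive lattice, then `reg(S/I_L) ≥ 3`: in the
minimal graded free resolution of `S/I_L` some shift satisfies `j - i ≥ 3`. -/
theorem reg_ge_three_of_modular_nondistributive (K : Type*) [Field K]
    (L : Type*) [Lattice L] [Fintype L] [IsModularLattice L]
    (hnd : ¬ ∀ x y z : L, x ⊓ (y ⊔ z) = (x ⊓ y) ⊔ (x ⊓ z)) :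
    Nonempty (MinGradedFreeRes K L (joinMeetIdeal K L)) ∧
      ∀ F : MinGradedFreeRes K L (joinMeetIdeal K L),
        ∃ i, ∃ b : F.B i, i + 3 ≤ F.deg i b := by
  exact ⟨exists_res _ (jm_homog K L) (jm_const K L), reg_of_res K L hnd⟩
end
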